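/- Monotonicity of the maximal difference. Under the assumptions of the Strong Maximum Principle (Ω ⊂ ℝ^N bounded of class W^{2,∞}; H coercive satisfying (H0') and (He'') with m > 1; (M), (J0), (J1), (E'); iterative covering property), let u, v be bounded viscosity sub- and supersolutions of ∂_t u − I[u(·,t)](x) + H(x,Du) = 0 in Ω×(0,∞) with generalized Neumann condition on ∂Ω×(0,∞), and define k(t) = max_{cl(Ω)}(u(·,t) − v(·,t)) for t ∈ [0,∞). Then k(t) ≤ k(s) for all 0 ≤ s ≤ t. -/

import Mathlib

set_option autoImplicit false

/- Common framework for censored nonlocal Hamilton–Jacobi equations with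
Neumann boundary conditions (Barles-type viscosity solutions). -/

open Set Metric MeasureTheory Filter Topology Function
open scoped RealInnerProductSpace NNReal ENNReal

noncomputable section

namespace Censored

abbrev Euc (N : ℕ) : Type := EuclideanSpace ℝ (Fin N)

variable {N : ℕ}

/-- Signed distance to the boundary of `Ω`, positive inside `Ω`. -/
def sdist (Ω : Set (Euc N)) (x : Euc N) : ℝ := infDist x Ωᶜ - infDist x Ω

/-- A modulus of continuity. -/
def IsModulus (ω : ℝ → ℝ) : Prop :=
  (∀ s, 0 ≤ ω s) ∧ Monotone ω ∧ Tendsto ω (nhdsWithin 0 (Ioi 0)) (nhds 0)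

/-- A `W^{2,∞}` boundary chart for `Ω` at `s`, with radius `r`: a diffeomorphism of
class `W^{2,∞}` (i.e. `C^1` with Lipschitz differential, with inverse of the same
regularity) whose `N`-th component coincides with the signed distance. -/
def IsW2Chart (hN : 0 < N) (Ω : Set (Euc N)) (s : Euc N) (r : ℝ)
    (ψ ψinv : Euc N → Euc N) : Prop :=
  0 < r ∧
  ContDiffOn ℝ 1 ψ (ball s r) ∧
  (∃ L : ℝ≥0, LipschitzOnWith L (fun x => fderiv ℝ ψ x) (ball s r)) ∧
  ContDiffOn ℝ 1 ψinv (ψ '' ball s r) ∧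
  (∃ L : ℝ≥0, LipschitzOnWith L (fun x => fderiv ℝ ψinv x) (ψ '' ball s r)) ∧
  (∀ x ∈ ball s r, ψinv (ψ x) = x) ∧
  (∀ x ∈ ball s r, ψ x ⟨N - 1, Nat.sub_lt hN Nat.one_pos⟩ = sdist Ω x)

/-- Assumption (O): `Ω` is open of class `W^{2,∞}`. -/
def IsW2Domain (hN : 0 < N) (Ω : Set (Euc N)) : Prop :=
  IsOpen Ω ∧ ∀ s ∈ frontier Ω, ∃ r ψ ψinv, IsW2Chart hN Ω s r ψ ψinv

/-- `n` is the exterior unit normal vector field to `∂Ω`:  `n = -D d` where `d` is the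
signed distance (positive inside). -/
def IsExteriorNormal (Ω : Set (Euc N)) (n : Euc N → Euc N) : Prop :=
  ∀ x ∈ frontier Ω, ‖n x‖ = 1 ∧ HasGradientAt (sdist Ω) (-(n x)) x

/-- First part of assumption (M): the measures `μ_x` have a (measurable, nonnegative)
density `g x` with respect to Lebesgue measure, bounded by `Cμ |z|^{-(N+σ)}`. -/
def AssumptionM1 (Ω : Set (Euc N)) (g : Euc N → Euc N → ℝ) (Cμ σ : ℝ) : Prop :=
  0 < Cμ ∧ σ ∈ Ioo (0:ℝ) 1 ∧ (∀ x, Measurable (g x)) ∧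
  (∀ x ∈ closure Ω, ∀ z : Euc N, 0 ≤ g x z) ∧
  (∀ x ∈ closure Ω, ∀ z : Euc N, g x z ≤ Cμ * ‖z‖ ^ (-((N : ℝ) + σ)))

/-- Assumption (M). -/
def AssumptionM (Ω : Set (Euc N)) (g : Euc N → Euc N → ℝ) (Cμ Dμ σ : ℝ) : Prop :=
  AssumptionM1 Ω g Cμ σ ∧ 0 < Dμ ∧
  (∀ x ∈ closure Ω, ∀ y ∈ closure Ω, ∀ z : Euc N,
    |g x z - g y z| ≤ Dμ * ‖x - y‖ * ‖z‖ ^ (-((N : ℝ) + σ)))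

/-- Assumption (J0). -/
def AssumptionJ0 (Ω : Set (Euc N)) (j : Euc N → Euc N → Euc N) (Aj : ℝ) : Prop :=
  ∀ x ∈ closure Ω,
    ContDiff ℝ 1 (j x) ∧ Function.Bijective (j x) ∧
    ContDiff ℝ 1 (Function.invFun (j x)) ∧
    ∀ z : Euc N, ‖fderiv ℝ (Function.invFun (j x)) z‖ ≤ Aj

/-- Assumption (J1). -/
def AssumptionJ1 (Ω : Set (Euc N)) (j : Euc N → Euc N → Euc N) (Cj' Cj Dj : ℝ) : Prop :=
  0 < Cj' ∧ 0 < Cj ∧ 0 < Dj ∧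
  (∀ x ∈ closure Ω, ∀ z : Euc N, Cj' * ‖z‖ ≤ ‖j x z‖ ∧ ‖j x z‖ ≤ Cj * ‖z‖) ∧
  (∀ x ∈ closure Ω, ∀ y ∈ closure Ω, ∀ z : Euc N, ‖j x z - j y z‖ ≤ Dj * ‖z‖ * ‖x - y‖)

/-- The truncated censored nonlocal term over `{|z| ≥ ξ}` (`I^ξ`). -/
def Iout (Ω : Set (Euc N)) (j : Euc N → Euc N → Euc N) (g : Euc N → Euc N → ℝ)
    (ξ : ℝ) (u : Euc N → ℝ) (x : Euc N) : ℝ :=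
  ∫ z in {z : Euc N | ξ ≤ ‖z‖ ∧ x + j x z ∈ closure Ω}, (u (x + j x z) - u x) * g x z

/-- The truncated censored nonlocal term over `{|z| < ξ}` (`I_ξ`). -/
def Iin (Ω : Set (Euc N)) (j : Euc N → Euc N → Euc N) (g : Euc N → Euc N → ℝ)
    (ξ : ℝ) (φ : Euc N → ℝ) (x : Euc N) : ℝ :=
  ∫ z in {z : Euc N | ‖z‖ < ξ ∧ x + j x z ∈ closure Ω}, (φ (x + j x z) - φ x) * g x z

/-- The censored nonlocal operator of order `σ < 1`, as a principal value. -/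
def Ipv (Ω : Set (Euc N)) (j : Euc N → Euc N → Euc N) (g : Euc N → Euc N → ℝ)
    (u : Euc N → ℝ) (x : Euc N) : ℝ :=
  limUnder (nhdsWithin (0:ℝ) (Ioi 0)) (fun δ =>
    ∫ z in {z : Euc N | δ < ‖z‖ ∧ x + j x z ∈ closure Ω}, (u (x + j x z) - u x) * g x z)

/-- `u` is bounded on `S`. -/
def BddOn (u : Euc N → ℝ) (S : Set (Euc N)) : Prop := ∃ M, ∀ x ∈ S, |u x| ≤ M

/-- `u = u(x,t)` is bounded on `S × I`. -/
def BddOnT (u : Euc N → ℝ → ℝ) (S : Set (Euc N)) (I : Set ℝ) : Prop :=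
  ∃ M, ∀ x ∈ S, ∀ t ∈ I, |u x t| ≤ M

/-- Viscosity subsolution, with generalized Neumann boundary conditions, of the
stationary equation `F(x, u, Du, I[u]) = 0` in `Ω`, `∂u/∂n = 0` on `∂Ω`,
for the censored operator determined by `j, g` (with constant `Cj` from (J1)). -/
def IsSubSol (Ω : Set (Euc N)) (j : Euc N → Euc N → Euc N) (g : Euc N → Euc N → ℝ)
    (n : Euc N → Euc N) (Cj : ℝ) (F : Euc N → ℝ → Euc N → ℝ → ℝ) (u : Euc N → ℝ) : Prop :=
  ∀ ξ > (0:ℝ), ∀ φ : Euc N → ℝ, ContDiff ℝ 1 φ →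
    ∀ x ∈ closure Ω,
      (∀ y ∈ closedBall x (Cj * ξ) ∩ closure Ω, u y - φ y ≤ u x - φ x) →
      (x ∈ Ω → F x (u x) (gradient φ x) (Iin Ω j g ξ φ x + Iout Ω j g ξ u x) ≤ 0) ∧
      (x ∈ frontier Ω →
        min (F x (u x) (gradient φ x) (Iin Ω j g ξ φ x + Iout Ω j g ξ u x))
          ⟪gradient φ x, n x⟫ ≤ 0)

/-- Viscosity supersolution, with generalized Neumann boundary conditions. -/
def IsSuperSol (Ω : Set (Euc N)) (j : Euc N → Euc N → Euc N) (g : Euc N → Euc N → ℝ)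
    (n : Euc N → Euc N) (Cj : ℝ) (F : Euc N → ℝ → Euc N → ℝ → ℝ) (v : Euc N → ℝ) : Prop :=
  ∀ ξ > (0:ℝ), ∀ φ : Euc N → ℝ, ContDiff ℝ 1 φ →
    ∀ x ∈ closure Ω,
      (∀ y ∈ closedBall x (Cj * ξ) ∩ closure Ω, v x - φ x ≤ v y - φ y) →
      (x ∈ Ω → 0 ≤ F x (v x) (gradient φ x) (Iin Ω j g ξ φ x + Iout Ω j g ξ v x)) ∧
      (x ∈ frontier Ω →
        0 ≤ max (F x (v x) (gradient φ x) (Iin Ω j g ξ φ x + Iout Ω j g ξ v x))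
          ⟪gradient φ x, n x⟫)

/-- `F` corresponding to the stationary equation `u - I[u] + H(x,Du) = 0`. -/
def statF (H : Euc N → Euc N → ℝ) : Euc N → ℝ → Euc N → ℝ → ℝ :=
  fun x r p I => r - I + H x p

/-- `F` corresponding to the ergodic equation `λ - I[w] - H(x,Dw) = 0`. -/
def ergF (H : Euc N → Euc N → ℝ) (lam : ℝ) : Euc N → ℝ → Euc N → ℝ → ℝ :=
  fun x _ p I => lam - I - H x p

/-- Parabolic viscosity subsolution with generalized Neumann boundary conditions,
for `F(x, t, ∂_t u, u, Du, I[u(·,t)]) = 0` in `Ω × (0,∞)`. -/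
def IsParSubSol (Ω : Set (Euc N)) (j : Euc N → Euc N → Euc N) (g : Euc N → Euc N → ℝ)
    (n : Euc N → Euc N) (Cj : ℝ) (F : Euc N → ℝ → ℝ → ℝ → Euc N → ℝ → ℝ)
    (u : Euc N → ℝ → ℝ) : Prop :=
  ∀ ξ > (0:ℝ), ∀ φ : Euc N → ℝ → ℝ,
    ContDiff ℝ 1 (fun q : Euc N × ℝ => φ q.1 q.2) →
    ∀ x ∈ closure Ω, ∀ t ∈ Ioi (0:ℝ),
      (∀ y ∈ closedBall x (Cj * ξ) ∩ closure Ω, ∀ s ∈ Ioi (0:ℝ), |s - t| ≤ ξ →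
        u y s - φ y s ≤ u x t - φ x t) →
      (x ∈ Ω →
        F x t (deriv (φ x) t) (u x t) (gradient (fun y => φ y t) x)
          (Iin Ω j g ξ (fun y => φ y t) x + Iout Ω j g ξ (fun y => u y t) x) ≤ 0) ∧
      (x ∈ frontier Ω →
        min (F x t (deriv (φ x) t) (u x t) (gradient (fun y => φ y t) x)
              (Iin Ω j g ξ (fun y => φ y t) x + Iout Ω j g ξ (fun y => u y t) x))
          ⟪gradient (fun y => φ y t) x, n x⟫ ≤ 0)

/-- Parabolic viscosity supersolution with generalized Neumann boundary conditions. -/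
def IsParSuperSol (Ω : Set (Euc N)) (j : Euc N → Euc N → Euc N) (g : Euc N → Euc N → ℝ)
    (n : Euc N → Euc N) (Cj : ℝ) (F : Euc N → ℝ → ℝ → ℝ → Euc N → ℝ → ℝ)
    (v : Euc N → ℝ → ℝ) : Prop :=
  ∀ ξ > (0:ℝ), ∀ φ : Euc N → ℝ → ℝ,
    ContDiff ℝ 1 (fun q : Euc N × ℝ => φ q.1 q.2) →
    ∀ x ∈ closure Ω, ∀ t ∈ Ioi (0:ℝ),
      (∀ y ∈ closedBall x (Cj * ξ) ∩ closure Ω, ∀ s ∈ Ioi (0:ℝ), |s - t| ≤ ξ →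
        v x t - φ x t ≤ v y s - φ y s) →
      (x ∈ Ω →
        0 ≤ F x t (deriv (φ x) t) (v x t) (gradient (fun y => φ y t) x)
          (Iin Ω j g ξ (fun y => φ y t) x + Iout Ω j g ξ (fun y => v y t) x)) ∧
      (x ∈ frontier Ω →
        0 ≤ max (F x t (deriv (φ x) t) (v x t) (gradient (fun y => φ y t) x)
              (Iin Ω j g ξ (fun y => φ y t) x + Iout Ω j g ξ (fun y => v y t) x))
          ⟪gradient (fun y => φ y t) x, n x⟫)

/-- `F` for the parabolic equation `∂_t u - I[u] + H(x,t,u,Du) = 0`. -/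
def parF (H : Euc N → ℝ → ℝ → Euc N → ℝ) : Euc N → ℝ → ℝ → ℝ → Euc N → ℝ → ℝ :=
  fun x t pt r p I => pt - I + H x t r p

/-! ### Hamiltonians: Bellman form and coercive form (stationary) -/




/-- `H` is of Bellman type with drift `b` and cost `l` over the control set `A`. -/
def IsBellman {A : Type} (b : Euc N → A → Euc N) (l : Euc N → A → ℝ)
    (H : Euc N → Euc N → ℝ) : Prop :=
  ∀ x p, H x p = ⨆ α : A, (-⟪b x α, p⟫ - l x α)

/-- Continuity and boundedness of the Bellman data `b, l`. -/
def BellmanData {A : Type} [TopologicalSpace A]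
    (b : Euc N → A → Euc N) (l : Euc N → A → ℝ) : Prop :=
  Continuous (fun q : Euc N × A => b q.1 q.2) ∧ (∃ M, ∀ x α, ‖b x α‖ ≤ M) ∧
  Continuous (fun q : Euc N × A => l q.1 q.2) ∧ (∃ M, ∀ x α, |l x α| ≤ M)

/-- Assumption (C): uniform continuity of the cost `l`. -/
def AssumptionC (Ω : Set (Euc N)) {A : Type} (l : Euc N → A → ℝ) : Prop :=
  ∃ ω, IsModulus ω ∧ ∀ (α : A), ∀ x ∈ closure Ω, ∀ y ∈ closure Ω,
    |l x α - l y α| ≤ ω ‖x - y‖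

/-- Assumption (L): uniform Lipschitz continuity of the drift `b`. -/
def AssumptionL (Ω : Set (Euc N)) {A : Type} (b : Euc N → A → Euc N) : Prop :=
  ∃ C > (0:ℝ), ∀ (α : A), ∀ x ∈ closure Ω, ∀ y ∈ closure Ω,
    ‖b x α - b y α‖ ≤ C * ‖x - y‖

/-- The part of the boundary where the drift points inwards for every control. -/
def GammaIn (Ω : Set (Euc N)) (n : Euc N → Euc N) {A : Type}
    (b : Euc N → A → Euc N) : Set (Euc N) :=
  {x | x ∈ frontier Ω ∧ ∀ α : A, ⟪b x α, n x⟫ < 0}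

/-- The part of the boundary where the drift points outwards for every control. -/
def GammaOut (Ω : Set (Euc N)) (n : Euc N → Euc N) {A : Type}
    (b : Euc N → A → Euc N) : Set (Euc N) :=
  {x | x ∈ frontier Ω ∧ ∀ α : A, 0 < ⟪b x α, n x⟫}

/-- The part of the boundary where the drift points both inwards and outwards. -/
def GammaMix (Ω : Set (Euc N)) (n : Euc N → Euc N) {A : Type}
    (b : Euc N → A → Euc N) : Set (Euc N) :=
  {x | x ∈ frontier Ω ∧ ∃ α₁ α₂ : A, ⟪b x α₁, n x⟫ < 0 ∧ 0 < ⟪b x α₂, n x⟫}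

/-- `S` is a union of connected components of `T`. -/
def IsUnionOfComponents (S T : Set (Euc N)) : Prop :=
  S ⊆ T ∧ ∀ x ∈ S, connectedComponentIn T x ⊆ S

/-- Assumption (B). -/
def AssumptionB (Ω : Set (Euc N)) (n : Euc N → Euc N) {A : Type}
    (b : Euc N → A → Euc N) : Prop :=
  GammaIn Ω n b ∪ GammaOut Ω n b ∪ GammaMix Ω n b = frontier Ω ∧
  IsUnionOfComponents (GammaIn Ω n b) (frontier Ω) ∧
  IsUnionOfComponents (GammaOut Ω n b) (frontier Ω) ∧
  IsUnionOfComponents (GammaMix Ω n b) (frontier Ω)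

/-- All the structural assumptions on a Bellman Hamiltonian: (C), (L), (B) together
with continuity and boundedness of the data. -/
def StatBellmanOK (Ω : Set (Euc N)) (n : Euc N → Euc N) {A : Type} [TopologicalSpace A]
    (b : Euc N → A → Euc N) (l : Euc N → A → ℝ) (H : Euc N → Euc N → ℝ) : Prop :=
  BellmanData b l ∧ IsBellman b l H ∧ AssumptionC Ω l ∧ AssumptionL Ω b ∧ AssumptionB Ω n b

/-- Assumption (H1): superfractional coercivity of order `m > σ`. -/
def AssumptionH1 (Ω : Set (Euc N)) (H : Euc N → Euc N → ℝ) (σ m c₀ D : ℝ) : Prop :=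
  σ < m ∧ 0 < c₀ ∧ 0 < D ∧ ∀ x ∈ closure Ω, ∀ p : Euc N, c₀ * ‖p‖ ^ m - D ≤ H x p

/-- Assumption (Ha) (sublinear case) with constant `C` and modulus `ω₁`. -/
def AssumptionHa (H : Euc N → Euc N → ℝ) (C : ℝ) (ω₁ : ℝ → ℝ) : Prop :=
  0 < C ∧ IsModulus ω₁ ∧
  ∀ x y p q : Euc N, H y p - H x q ≤ ω₁ ‖x - y‖ * (1 + ‖p‖) + C * ‖p - q‖

/-- Assumption (Hb) (superlinear case) with constants `m, A, Cb`. -/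
def AssumptionHb (H : Euc N → Euc N → ℝ) (m A Cb : ℝ) : Prop :=
  1 < m ∧ 0 < A ∧ 0 < Cb ∧
  ∀ μ ∈ Ioo (0:ℝ) 1, ∀ x p : Euc N,
    H x p - μ * H x (μ⁻¹ • p) ≤ (1 - μ) * (Cb * (1 - m) * ‖p‖ ^ m + A)

/-- Assumption (Hc) with constant `C` and modulus `ω₁`. -/
def AssumptionHc (H : Euc N → Euc N → ℝ) (m C : ℝ) (ω₁ : ℝ → ℝ) : Prop :=
  0 < C ∧ IsModulus ω₁ ∧
  ∀ x y p q : Euc N,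
    H y p - H x q ≤ ω₁ ‖x - y‖ * (1 + (max ‖p‖ ‖q‖) ^ m)
      + C * ‖p - q‖ * (max ‖p‖ ‖q‖) ^ (m - 1)

/-- The structural assumptions on a coercive Hamiltonian:
(H1), (Ha) (sublinear) or (H1), (Hb), (Hc) (superlinear). -/
def StatCoerciveOK (Ω : Set (Euc N)) (H : Euc N → Euc N → ℝ) (σ : ℝ) : Prop :=
  ∃ m c₀ D, AssumptionH1 Ω H σ m c₀ D ∧
    ((m ≤ 1 ∧ ∃ C ω₁, AssumptionHa H C ω₁) ∨
     (∃ A Cb, AssumptionHb H m A Cb ∧ ∃ C ω₁, AssumptionHc H m C ω₁))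

/-- Assumption (E). -/
def AssumptionE (Ω : Set (Euc N)) (H : Euc N → Euc N → ℝ) : Prop :=
  ∀ R > (0:ℝ), ∃ HR : ℝ, ∀ x ∈ closure Ω, ∀ p : Euc N, ‖p‖ ≤ R → |H x p| ≤ HR

/-! ### Parabolic Hamiltonians and assumptions -/

/-- `H(x,t,r,p)` is of (time-dependent) Bellman type. -/
def IsParBellman {A : Type} (lam : Euc N → ℝ → A → ℝ) (b : Euc N → ℝ → A → Euc N)
    (l : Euc N → ℝ → A → ℝ) (H : Euc N → ℝ → ℝ → Euc N → ℝ) : Prop :=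
  ∀ x t r p, H x t r p = ⨆ α : A, (lam x t α * r - ⟪b x t α, p⟫ - l x t α)

/-- Continuity and boundedness of the parabolic Bellman data. -/
def ParBellmanData {A : Type} [TopologicalSpace A] (lam : Euc N → ℝ → A → ℝ)
    (b : Euc N → ℝ → A → Euc N) (l : Euc N → ℝ → A → ℝ) : Prop :=
  Continuous (fun q : Euc N × ℝ × A => lam q.1 q.2.1 q.2.2) ∧
  (∃ M, ∀ x t α, |lam x t α| ≤ M) ∧
  Continuous (fun q : Euc N × ℝ × A => b q.1 q.2.1 q.2.2) ∧
  (∃ M, ∀ x t α, ‖b x t α‖ ≤ M) ∧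
  Continuous (fun q : Euc N × ℝ × A => l q.1 q.2.1 q.2.2) ∧
  (∃ M, ∀ x t α, |l x t α| ≤ M)

/-- Assumption (C'): uniform continuity of `l` and `λ` in `(x,t)`, uniformly in `α`. -/
def AssumptionC' (Ω : Set (Euc N)) {A : Type} (lam l : Euc N → ℝ → A → ℝ) : Prop :=
  (∃ ω, IsModulus ω ∧ ∀ (α : A), ∀ x ∈ closure Ω, ∀ y ∈ closure Ω,
      ∀ t ∈ Ici (0:ℝ), ∀ s ∈ Ici (0:ℝ), |l x t α - l y s α| ≤ ω (‖x - y‖ + |t - s|)) ∧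
  (∃ ω, IsModulus ω ∧ ∀ (α : A), ∀ x ∈ closure Ω, ∀ y ∈ closure Ω,
      ∀ t ∈ Ici (0:ℝ), ∀ s ∈ Ici (0:ℝ), |lam x t α - lam y s α| ≤ ω (‖x - y‖ + |t - s|))

/-- Assumption (L'): uniform Lipschitz continuity of the drift `b` in `(x,t)`. -/
def AssumptionL' (Ω : Set (Euc N)) {A : Type} (b : Euc N → ℝ → A → Euc N) : Prop :=
  ∃ C > (0:ℝ), ∀ (α : A), ∀ x ∈ closure Ω, ∀ y ∈ closure Ω, ∀ s ∈ Ici (0:ℝ), ∀ t ∈ Ici (0:ℝ),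
    ‖b x s α - b y t α‖ ≤ C * (‖x - y‖ + |s - t|)

/-- Inward part of the boundary for time-dependent drift. -/
def GammaInT (Ω : Set (Euc N)) (n : Euc N → Euc N) {A : Type}
    (b : Euc N → ℝ → A → Euc N) : Set (Euc N) :=
  {x | x ∈ frontier Ω ∧ ∀ t ∈ Ici (0:ℝ), ∀ α : A, ⟪b x t α, n x⟫ < 0}

/-- Outward part of the boundary for time-dependent drift. -/
def GammaOutT (Ω : Set (Euc N)) (n : Euc N → Euc N) {A : Type}
    (b : Euc N → ℝ → A → Euc N) : Set (Euc N) :=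
  {x | x ∈ frontier Ω ∧ ∀ t ∈ Ici (0:ℝ), ∀ α : A, 0 < ⟪b x t α, n x⟫}

/-- Mixed part of the boundary for time-dependent drift. -/
def GammaMixT (Ω : Set (Euc N)) (n : Euc N → Euc N) {A : Type}
    (b : Euc N → ℝ → A → Euc N) : Set (Euc N) :=
  {x | x ∈ frontier Ω ∧ ∀ t ∈ Ici (0:ℝ),
    ∃ α₁ α₂ : A, ⟪b x t α₁, n x⟫ < 0 ∧ 0 < ⟪b x t α₂, n x⟫}

/-- Assumption (B'). -/
def AssumptionB' (Ω : Set (Euc N)) (n : Euc N → Euc N) {A : Type}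
    (b : Euc N → ℝ → A → Euc N) : Prop :=
  GammaInT Ω n b ∪ GammaOutT Ω n b ∪ GammaMixT Ω n b = frontier Ω ∧
  IsUnionOfComponents (GammaInT Ω n b) (frontier Ω) ∧
  IsUnionOfComponents (GammaOutT Ω n b) (frontier Ω) ∧
  IsUnionOfComponents (GammaMixT Ω n b) (frontier Ω)

/-- All the structural assumptions on a parabolic Bellman Hamiltonian: (C'), (L'), (B'). -/
def ParBellmanOK (Ω : Set (Euc N)) (n : Euc N → Euc N) {A : Type} [TopologicalSpace A]
    (lam : Euc N → ℝ → A → ℝ) (b : Euc N → ℝ → A → Euc N) (l : Euc N → ℝ → A → ℝ)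
    (H : Euc N → ℝ → ℝ → Euc N → ℝ) : Prop :=
  ParBellmanData lam b l ∧ IsParBellman lam b l H ∧
  AssumptionC' Ω lam l ∧ AssumptionL' Ω b ∧ AssumptionB' Ω n b

/-- Assumption (H'): monotonicity of `H` in the `u` variable. -/
def AssumptionH' (Ω : Set (Euc N)) (H : Euc N → ℝ → ℝ → Euc N → ℝ) : Prop :=
  ∃ K : ℝ, ∀ R > (0:ℝ), ∃ γ, -K ≤ γ ∧
    ∀ x ∈ closure Ω, ∀ t ∈ Icc (0:ℝ) R, ∀ r s : ℝ, |r| ≤ R → |s| ≤ R → s ≤ r →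
      ∀ p : Euc N, γ * (r - s) ≤ H x t r p - H x t s p

/-- Assumption (H''): the monotonicity constants `γ_R` are bounded below by some `γ₀ > 0`. -/
def AssumptionH'' (Ω : Set (Euc N)) (H : Euc N → ℝ → ℝ → Euc N → ℝ) : Prop :=
  ∃ γ₀ > (0:ℝ), ∀ R > (0:ℝ), ∃ γ, γ₀ ≤ γ ∧
    ∀ x ∈ closure Ω, ∀ t ∈ Icc (0:ℝ) R, ∀ r s : ℝ, |r| ≤ R → |s| ≤ R → s ≤ r →
      ∀ p : Euc N, γ * (r - s) ≤ H x t r p - H x t s p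

/-- Assumption (E'). -/
def AssumptionE' (Ω : Set (Euc N)) (H : Euc N → ℝ → ℝ → Euc N → ℝ) : Prop :=
  ∀ T > (0:ℝ), ∀ R > (0:ℝ), ∃ HR : ℝ, ∀ x ∈ Ω, ∀ t ∈ Icc (0:ℝ) T, ∀ r : ℝ, ∀ p : Euc N,
    |r| ≤ R → ‖p‖ ≤ R → |H x t r p| ≤ HR

/-- Assumption (H0'): separated structure `H(x,t,r,p) = H₀(x,r,p) - f(x,t)`. -/
def AssumptionH0' (H : Euc N → ℝ → ℝ → Euc N → ℝ) : Prop :=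
  ∃ (H₀ : Euc N → ℝ → Euc N → ℝ) (f : Euc N → ℝ → ℝ),
    Continuous (fun q : Euc N × ℝ × Euc N => H₀ q.1 q.2.1 q.2.2) ∧
    UniformContinuous (fun q : Euc N × ℝ => f q.1 q.2) ∧
    (∃ M, ∀ x t, |f x t| ≤ M) ∧
    ∀ x t r p, H x t r p = H₀ x r p - f x t

/-- Assumption (He'): `H` satisfies (H1), (Ha) in `x`, uniformly in `t`
and uniformly on compact sets in `r` (sublinearly coercive case). -/
def AssumptionHe' (Ω : Set (Euc N)) (H : Euc N → ℝ → ℝ → Euc N → ℝ) (σ : ℝ) : Prop :=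
  ∃ m : ℝ, σ < m ∧ m ≤ 1 ∧
    ∀ R > (0:ℝ),
      (∃ c₀ > (0:ℝ), ∃ D > (0:ℝ), ∀ x ∈ closure Ω, ∀ t ∈ Ici (0:ℝ), ∀ r : ℝ, |r| ≤ R →
        ∀ p : Euc N, c₀ * ‖p‖ ^ m - D ≤ H x t r p) ∧
      (∃ C > (0:ℝ), ∃ ω₁, IsModulus ω₁ ∧ ∀ x y : Euc N, ∀ t ∈ Ici (0:ℝ), ∀ r : ℝ, |r| ≤ R →
        ∀ p q : Euc N, H y t r p - H x t r q ≤ ω₁ ‖x - y‖ * (1 + ‖p‖) + C * ‖p - q‖)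

/-- Assumption (He''): `H` satisfies (H1), (Hb), (Hc) in `x`, uniformly in `t`
and uniformly on compact sets in `r` (superlinearly coercive case, exponent `m`). -/
def AssumptionHe'' (Ω : Set (Euc N)) (H : Euc N → ℝ → ℝ → Euc N → ℝ) (σ m : ℝ) : Prop :=
  1 < m ∧ σ < m ∧
  ∀ R > (0:ℝ),
    (∃ c₀ > (0:ℝ), ∃ D > (0:ℝ), ∀ x ∈ closure Ω, ∀ t ∈ Ici (0:ℝ), ∀ r : ℝ, |r| ≤ R →
      ∀ p : Euc N, c₀ * ‖p‖ ^ m - D ≤ H x t r p) ∧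
    (∃ A > (0:ℝ), ∃ Cb > (0:ℝ), ∀ μ ∈ Ioo (0:ℝ) 1, ∀ x ∈ closure Ω, ∀ t ∈ Ici (0:ℝ),
      ∀ r : ℝ, |r| ≤ R → ∀ p : Euc N,
        H x t r p - μ * H x t r (μ⁻¹ • p) ≤ (1 - μ) * (Cb * (1 - m) * ‖p‖ ^ m + A)) ∧
    (∃ C > (0:ℝ), ∃ ω₁, IsModulus ω₁ ∧ ∀ x y : Euc N, ∀ t ∈ Ici (0:ℝ), ∀ r : ℝ, |r| ≤ R →
      ∀ p q : Euc N, H y t r p - H x t r q ≤ ω₁ ‖x - y‖ * (1 + (max ‖p‖ ‖q‖) ^ m)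
        + C * ‖p - q‖ * (max ‖p‖ ‖q‖) ^ (m - 1))

/-- Structural parabolic coercive assumptions: (H0') and (He') or (He''). -/
def ParCoerciveOK (Ω : Set (Euc N)) (H : Euc N → ℝ → ℝ → Euc N → ℝ) (σ : ℝ) : Prop :=
  AssumptionH0' H ∧ (AssumptionHe' Ω H σ ∨ ∃ m, AssumptionHe'' Ω H σ m)

/-! ### Iterative covering property -/

/-- The iterated reachable sets `X_r(x)` of the censored jump process. -/
def Xiter (Ω : Set (Euc N)) (j : Euc N → Euc N → Euc N) (g : Euc N → Euc N → ℝ)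
    (x : Euc N) : ℕ → Set (Euc N)
  | 0 => {x}
  | r + 1 => (⋃ ξ ∈ Xiter Ω j g x r,
      (fun z => ξ + j ξ z) '' closure (Function.support (g ξ))) ∩ closure Ω

/-- Iterative covering property: `𝒳(x) = Ω` (i.e. the closure of the reachable set
is all of `closure Ω`) for every `x ∈ Ω`. -/
def CoveringProperty (Ω : Set (Euc N)) (j : Euc N → Euc N → Euc N)
    (g : Euc N → Euc N → ℝ) : Prop :=
  ∀ x ∈ Ω, closure (⋃ r : ℕ, Xiter Ω j g x r) = closure Ω


/-- The weight `|z| * |z|^{-(N+σ)}`. -/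
def Wt (N : ℕ) (σ : ℝ) (z : Euc N) : ℝ := ‖z‖ * ‖z‖ ^ (-((N : ℝ) + σ))

lemma Wt_nonneg (σ : ℝ) (z : Euc N) : 0 ≤ Wt N σ z := by unfold Wt; positivity

lemma Wt_measurable (σ : ℝ) : Measurable (Wt N σ) := by unfold Wt; fun_prop

lemma Wt_integrableOn (hN : 0 < N) {σ : ℝ} (hσ : σ ∈ Ioo (0:ℝ) 1) (R : ℝ) :
    IntegrableOn (Wt N σ) (ball (0 : Euc N) R) := by
  refine integrableOn_ball_of_norm_le_rpow (C := 1) (α := (N:ℝ) + σ - 1) ?_ ?_ ?_ ?_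
  · rw [finrank_euclideanSpace_fin]; exact hN
  · simp; linarith [hσ.2]
  · refine Eventually.of_forall fun z => ?_
    rw [Real.norm_of_nonneg (Wt_nonneg _ _), one_mul, Wt]
    rcases eq_or_ne z 0 with rfl | hz
    · simp; positivity
    · have : 0 < ‖z‖ := norm_pos_iff.2 hz
      nth_rewrite 1 [← Real.rpow_one ‖z‖]
      rw [← Real.rpow_add this]
      apply le_of_eq; congr 1; ring
  · exact (Wt_measurable σ).aestronglyMeasurable

lemma Wt_small (hN : 0 < N) {σ : ℝ} (hσ : σ ∈ Ioo (0:ℝ) 1) {e : ℝ} (he : 0 < e) :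
    ∃ ξ₀ > (0:ℝ), ∀ ξ > (0:ℝ), ξ ≤ ξ₀ → ∫ z in ball (0 : Euc N) ξ, Wt N σ z ≤ e := by
  have : Nonempty (Fin N) := ⟨⟨0, hN⟩⟩
  have hWint := Wt_integrableOn hN hσ 1
  have hanti : Antitone (fun k : ℕ => ball (0 : Euc N) (1 / ((k:ℝ) + 1))) := by
    intro a b hab
    exact ball_subset_ball (one_div_le_one_div_of_le (by positivity) (by simpa using hab))
  have ht := tendsto_setIntegral_of_antitone (μ := volume) (f := Wt N σ)
    (fun k => measurableSet_ball) hanti ⟨0, by simpa using hWint⟩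
  have hI : (⋂ k : ℕ, ball (0 : Euc N) (1 / ((k:ℝ) + 1))) = {0} := by
    ext z
    simp only [mem_iInter, mem_ball_zero_iff, mem_singleton_iff]
    constructor
    · intro h
      by_contra hz
      obtain ⟨k, hk⟩ := exists_nat_one_div_lt (norm_pos_iff.2 hz)
      exact absurd (h k) (not_lt.2 hk.le)
    · rintro rfl k; simp; positivity
  rw [hI] at ht
  have : ∫ z in ({0} : Set (Euc N)), Wt N σ z = 0 := by
    apply setIntegral_measure_zero; simp
  rw [this] at ht
  obtain ⟨k, hk⟩ := (ht.eventually (gt_mem_nhds he)).exists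
  refine ⟨1 / ((k:ℝ)+1), by positivity, fun ξ hξ hle => le_trans ?_ hk.le⟩
  apply setIntegral_mono_set (hWint.mono_set (ball_subset_ball _))
  · exact Eventually.of_forall fun z => Wt_nonneg _ _
  · exact (ball_subset_ball hle).eventuallyLE
  · rw [div_le_one (by positivity)]; linarith [(Nat.cast_nonneg k : (0:ℝ) ≤ k)]

lemma sdist_frontier {Ω : Set (Euc N)} (hΩ : IsOpen Ω) {x : Euc N} (hx : x ∈ frontier Ω) :
    sdist Ω x = 0 := by
  have h1 : x ∈ Ωᶜ := by
    have := hx.2; rw [hΩ.interior_eq] at this; exact this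
  have h2 : infDist x Ω = 0 := by
    have hc : x ∈ closure Ω := hx.1
    exact (mem_closure_iff_infDist_zero (closure_nonempty_iff.1 ⟨x, hc⟩)).1 hc
  rw [sdist, infDist_zero_of_mem h1, h2, sub_zero]

lemma sdist_closure_nonneg {Ω : Set (Euc N)} {x : Euc N} (hx : x ∈ closure Ω) :
    0 ≤ sdist Ω x := by
  have h2 : infDist x Ω = 0 :=
    (mem_closure_iff_infDist_zero (closure_nonempty_iff.1 ⟨x, hx⟩)).1 hx
  rw [sdist, h2, sub_zero]; exact infDist_nonneg

lemma frontier_null (hN : 0 < N) {Ω : Set (Euc N)} (hΩ : IsW2Domain hN Ω) :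
    volume (frontier Ω) = 0 := by
  apply measure_null_of_locally_null
  intro s hs
  obtain ⟨r, ψ, ψinv, hr, -, -, hd, -, hinv, hlast⟩ := hΩ.2 s hs
  refine ⟨frontier Ω ∩ ball s r, inter_mem_nhdsWithin _ (ball_mem_nhds s hr), ?_⟩
  set i : Fin N := ⟨N - 1, Nat.sub_lt hN Nat.one_pos⟩ with hi
  have hsub : frontier Ω ∩ ball s r ⊆ ψinv '' (ψ '' ball s r ∩ {y | y i = 0}) := by
    rintro x ⟨hxf, hxb⟩
    refine ⟨ψ x, ⟨mem_image_of_mem _ hxb, ?_⟩, hinv x hxb⟩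
    rw [mem_ofPred_eq, hlast x hxb, sdist_frontier hΩ.1 hxf]
  refine measure_mono_null hsub ?_
  apply addHaar_image_eq_zero_of_differentiableOn_of_addHaar_eq_zero
  · exact (hd.differentiableOn one_ne_zero).mono inter_subset_left
  · refine measure_mono_null inter_subset_right ?_
    have := Measure.addHaar_submodule (volume : Measure (Euc N))
      (LinearMap.ker (EuclideanSpace.proj (𝕜 := ℝ) i : Euc N →L[ℝ] ℝ).toLinearMap) ?_
    · convert this using 2
      ext y; simp
    · intro h
      have h2 : (EuclideanSpace.single i (1:ℝ) : Euc N) ∈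
        LinearMap.ker (EuclideanSpace.proj (𝕜 := ℝ) i : Euc N →L[ℝ] ℝ).toLinearMap := by
        rw [h]; trivial
      simp at h2

/-- The set of admissible jumps. -/
def Eset (Ω : Set (Euc N)) (j : Euc N → Euc N → Euc N) (x : Euc N) : Set (Euc N) :=
  {z | x + j x z ∈ closure Ω}

lemma Eset_meas {Ω : Set (Euc N)} {j : Euc N → Euc N → Euc N} {Aj : ℝ}
    (hJ0 : AssumptionJ0 Ω j Aj) {x : Euc N} (hx : x ∈ closure Ω) :
    MeasurableSet (Eset Ω j x) := by
  have : Continuous (fun z => x + j x z) := continuous_const.add (hJ0 x hx).1.continuous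
  exact (isClosed_closure.preimage this).measurableSet

lemma Eset_bdd {Ω : Set (Euc N)} (hbdd : Bornology.IsBounded Ω) {j : Euc N → Euc N → Euc N}
    {Cj' Cj Dj : ℝ} (hJ1 : AssumptionJ1 Ω j Cj' Cj Dj) :
    ∃ R > (0:ℝ), ∀ x ∈ closure Ω, Eset Ω j x ⊆ ball 0 R := by
  obtain ⟨B, hB⟩ := hbdd.closure.exists_norm_le
  obtain ⟨h1, h2, h3, h4, h5⟩ := hJ1
  refine ⟨(2 * |B| + 1) / Cj', by positivity, fun x hx z hz => ?_⟩
  rw [mem_ball_zero_iff, lt_div_iff₀ h1]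
  have a := (h4 x hx z).1
  have b := hB _ hz
  have c := hB _ hx
  have d : ‖j x z‖ ≤ ‖x + j x z‖ + ‖x‖ := by
    have := norm_sub_le (x + j x z) x
    simpa using this
  have := le_abs_self B
  linarith [mul_comm ‖z‖ Cj']

lemma preimage_frontier_null (hN : 0 < N) {Ω : Set (Euc N)} (hΩ : IsW2Domain hN Ω)
    {j : Euc N → Euc N → Euc N} {Aj : ℝ}
    (hJ0 : AssumptionJ0 Ω j Aj) {x : Euc N} (hx : x ∈ closure Ω) :
    volume {z | x + j x z ∈ frontier Ω} = 0 := by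
  obtain ⟨-, hb, hd, -⟩ := hJ0 x hx
  have hsub : {z | x + j x z ∈ frontier Ω} ⊆
      Function.invFun (j x) '' ((fun w => x + w) ⁻¹' frontier Ω) := by
    intro z hz
    exact ⟨j x z, hz, Function.leftInverse_invFun hb.1 z⟩
  refine measure_mono_null hsub ?_
  apply addHaar_image_eq_zero_of_differentiableOn_of_addHaar_eq_zero
  · exact (hd.differentiable one_ne_zero).differentiableOn
  · rw [measure_preimage_add]; exact frontier_null hN hΩ

lemma setdiff_modulus (hN : 0 < N) {Ω : Set (Euc N)} (hΩ : IsW2Domain hN Ω)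
    (hbdd : Bornology.IsBounded Ω) {σ : ℝ} (hσ : σ ∈ Ioo (0:ℝ) 1)
    {j : Euc N → Euc N → Euc N} {Aj : ℝ} (hJ0 : AssumptionJ0 Ω j Aj)
    {Cj' Cj Dj : ℝ} (hJ1 : AssumptionJ1 Ω j Cj' Cj Dj) {e : ℝ} (he : 0 < e) :
    ∃ γ > (0:ℝ), ∀ x ∈ closure Ω, ∀ y ∈ closure Ω, ‖x - y‖ < γ →
      ∫ z in Eset Ω j x \ Eset Ω j y, Wt N σ z ≤ e := by
  by_contra! hcon
  have hpos : ∀ k : ℕ, (0:ℝ) < 1 / ((k:ℝ) + 1) := fun k => by positivity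
  choose x hx y hy hxy hbig using fun k : ℕ => hcon (1 / ((k:ℝ) + 1)) (hpos k)
  have hcomp : IsCompact (closure Ω) := hbdd.isCompact_closure
  obtain ⟨a, ha, φ, hφ, hxa⟩ := hcomp.tendsto_subseq hx
  have hxy0 : Tendsto (fun k => x k - y k) atTop (𝓝 0) := by
    rw [tendsto_zero_iff_norm_tendsto_zero]
    exact squeeze_zero (fun _ => norm_nonneg _) (fun k => (hxy k).le)
      tendsto_one_div_add_atTop_nhds_zero_nat
  have hya : Tendsto (y ∘ φ) atTop (𝓝 a) := by
    have := hxa.sub (hxy0.comp hφ.tendsto_atTop)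
    simpa [Function.comp_def] using this
  obtain ⟨R, hR, hER⟩ := Eset_bdd hbdd hJ1
  have hWR := Wt_integrableOn hN hσ R
  have hjt : ∀ p : ℕ → Euc N, (∀ k, p k ∈ closure Ω) → Tendsto p atTop (𝓝 a) → ∀ z,
      Tendsto (fun k => p k + j (p k) z) atTop (𝓝 (a + j a z)) := by
    intro p hp hpa z
    refine hpa.add ?_
    rw [tendsto_iff_norm_sub_tendsto_zero]
    refine squeeze_zero (fun _ => norm_nonneg _) (fun k => hJ1.2.2.2.2 _ (hp k) _ ha z) ?_
    have := (tendsto_iff_norm_sub_tendsto_zero.1 hpa).const_mul (Dj * ‖z‖)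
    simpa using this
  have hlim : Tendsto (fun k => ∫ z, (Eset Ω j (x (φ k)) \ Eset Ω j (y (φ k))).indicator
      (Wt N σ) z) atTop (𝓝 (∫ z : Euc N, (0:ℝ))) := by
    apply tendsto_integral_of_dominated_convergence ((ball 0 R).indicator (Wt N σ))
    · intro k
      exact ((Wt_measurable σ).indicator
        ((Eset_meas hJ0 (hx _)).diff (Eset_meas hJ0 (hy _)))).aestronglyMeasurable
    · rwa [integrable_indicator_iff measurableSet_ball]
    · intro k
      refine Eventually.of_forall fun z => ?_
      rw [Real.norm_of_nonneg (indicator_nonneg (fun _ _ => Wt_nonneg _ _) _)]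
      exact indicator_le_indicator_of_subset (sdiff_subset.trans (hER _ (hx _)))
        (fun _ => Wt_nonneg _ _) z
    · have hnull := preimage_frontier_null hN hΩ hJ0 ha
      have : ∀ᵐ z : Euc N, a + j a z ∉ frontier Ω := by
        rw [ae_iff]; simpa using hnull
      filter_upwards [this] with z hz
      apply tendsto_const_nhds.congr'
      by_cases hzΩ : a + j a z ∈ Ω
      · filter_upwards [(hjt _ (fun k => hy (φ k)) hya z).eventually (hΩ.1.mem_nhds hzΩ)] with k hk
        rw [indicator_of_notMem]
        intro h
        exact h.2 (subset_closure hk)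
      · have hzc : a + j a z ∈ (closure Ω)ᶜ := by
          intro h
          apply hz
          exact ⟨h, by rwa [hΩ.1.interior_eq]⟩
        filter_upwards [(hjt _ (fun k => hx (φ k)) hxa z).eventually
          (isClosed_closure.isOpen_compl.mem_nhds hzc)] with k hk
        rw [indicator_of_notMem]
        intro h
        exact hk h.1
  rw [integral_zero] at hlim
  obtain ⟨k, hk⟩ := (hlim.eventually (gt_mem_nhds he)).exists
  rw [integral_indicator ((Eset_meas hJ0 (hx _)).diff (Eset_meas hJ0 (hy _)))] at hk
  exact absurd hk (not_lt.2 (hbig (φ k)).le)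


lemma chart_sdist (hN : 0 < N) {Ω : Set (Euc N)} {s : Euc N} {r : ℝ}
    {ψ ψinv : Euc N → Euc N} (h : IsW2Chart hN Ω s r ψ ψinv) :
    ContDiffOn ℝ 1 (sdist Ω) (ball s r) ∧
    ∃ L : ℝ≥0, LipschitzOnWith L (fun x => fderiv ℝ (sdist Ω) x) (ball s r) := by
  obtain ⟨hr, hc, ⟨L, hL⟩, -, -, -, hlast⟩ := h
  set i : Fin N := ⟨N - 1, Nat.sub_lt hN Nat.one_pos⟩ with hi
  set π : Euc N →L[ℝ] ℝ := EuclideanSpace.proj (𝕜 := ℝ) i with hπ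
  have heq : EqOn (sdist Ω) (fun x => π (ψ x)) (ball s r) := fun x hx => (hlast x hx).symm
  refine ⟨(π.contDiff.comp_contDiffOn hc).congr heq, ‖π‖₊ * L, ?_⟩
  have hfd : ∀ x ∈ ball s r, fderiv ℝ (sdist Ω) x = π.comp (fderiv ℝ ψ x) := by
    intro x hx
    have hev : sdist Ω =ᶠ[𝓝 x] fun x => π (ψ x) := heq.eventuallyEq_of_mem (isOpen_ball.mem_nhds hx)
    rw [hev.fderiv_eq]
    have hdx : DifferentiableAt ℝ ψ x :=
      (hc.differentiableOn one_ne_zero).differentiableAt (isOpen_ball.mem_nhds hx)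
    exact (π.hasFDerivAt.comp x hdx.hasFDerivAt).fderiv
  apply LipschitzOnWith.of_dist_le_mul
  intro x hx y hy
  rw [hfd x hx, hfd y hy, dist_eq_norm, ← ContinuousLinearMap.comp_sub]
  refine (ContinuousLinearMap.opNorm_comp_le _ _).trans ?_
  have := hL.dist_le_mul x hx y hy
  rw [dist_eq_norm] at this
  push_cast
  rw [mul_assoc]
  exact mul_le_mul_of_nonneg_left this (norm_nonneg _)

/-- Local quadratic boundary inequality. -/
lemma boundary_local (hN : 0 < N) {Ω : Set (Euc N)} (hΩ : IsW2Domain hN Ω)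
    {n : Euc N → Euc N} (hn : IsExteriorNormal Ω n) {s : Euc N} (hs : s ∈ frontier Ω) :
    ∃ r > (0:ℝ), ∃ C ≥ (0:ℝ), ∀ x ∈ frontier Ω, ∀ y ∈ closure Ω, x ∈ ball s r → y ∈ ball s r →
      -(C * ‖x - y‖ ^ 2) ≤ ⟪x - y, n x⟫ := by
  obtain ⟨r, ψ, ψinv, hch⟩ := hΩ.2 s hs
  obtain ⟨hc, L, hL⟩ := chart_sdist hN hch
  refine ⟨r, hch.1, L, L.2, fun x hx y hy hxb hyb => ?_⟩
  have hdiff : ∀ w ∈ ball s r, DifferentiableAt ℝ (sdist Ω) w := fun w hw =>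
    (hc.differentiableOn one_ne_zero).differentiableAt (isOpen_ball.mem_nhds hw)
  have hseg : segment ℝ x y ⊆ ball s r := (convex_ball s r).segment_subset hxb hyb
  have hbound : ∀ w ∈ segment ℝ x y, ‖fderiv ℝ (sdist Ω) w - fderiv ℝ (sdist Ω) x‖
      ≤ L * ‖x - y‖ := by
    intro w hw
    have h1 := hL.dist_le_mul w (hseg hw) x hxb
    rw [dist_eq_norm] at h1
    refine h1.trans (mul_le_mul_of_nonneg_left ?_ L.2)
    rw [dist_comm, ← dist_eq_norm]
    have := dist_add_dist_of_mem_segment hw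
    linarith [dist_nonneg (x := w) (y := y)]
  have hmv := Convex.norm_image_sub_le_of_norm_hasFDerivWithin_le'
    (f := sdist Ω) (f' := fun w => fderiv ℝ (sdist Ω) w) (φ := fderiv ℝ (sdist Ω) x)
    (fun w hw => (hdiff w (hseg hw)).hasFDerivAt.hasFDerivWithinAt) hbound
    (convex_segment x y) (left_mem_segment ℝ x y) (right_mem_segment ℝ x y)
  have hg := (hn x hx).2
  rw [hasGradientAt_iff_hasFDerivAt] at hg
  rw [hg.fderiv, InnerProductSpace.toDual_apply_apply, sdist_frontier hΩ.1 hx] at hmv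
  have h0 := sdist_closure_nonneg hy
  have h1 := (abs_le.1 hmv).2
  rw [norm_sub_rev y x] at h1
  have h2 : ⟪-(n x), y - x⟫ = ⟪x - y, n x⟫ := by
    rw [real_inner_comm, inner_neg_right, ← inner_neg_left, neg_sub]
  rw [h2] at h1
  nlinarith

lemma boundary_quad (hN : 0 < N) {Ω : Set (Euc N)} (hΩ : IsW2Domain hN Ω)
    (hbdd : Bornology.IsBounded Ω)
    {n : Euc N → Euc N} (hn : IsExteriorNormal Ω n) :
    ∃ r > (0:ℝ), ∃ C ≥ (0:ℝ), ∀ x ∈ frontier Ω, ∀ y ∈ closure Ω, ‖x - y‖ < r →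
      -(C * ‖x - y‖ ^ 2) ≤ ⟪x - y, n x⟫ := by
  have hcomp : IsCompact (frontier Ω) :=
    hbdd.isCompact_closure.of_isClosed_subset isClosed_frontier frontier_subset_closure
  by_contra! hcon
  have hpos : ∀ k : ℕ, (0:ℝ) < 1 / ((k:ℝ) + 1) := fun k => by positivity
  choose x hx y hy hxy hbig using fun k : ℕ => hcon (1 / ((k:ℝ) + 1)) (hpos k) (k:ℝ) (by positivity)
  obtain ⟨a, ha, φ, hφ, hxa⟩ := hcomp.tendsto_subseq hx
  have hxy0 : Tendsto (fun k => x k - y k) atTop (𝓝 0) := by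
    rw [tendsto_zero_iff_norm_tendsto_zero]
    exact squeeze_zero (fun _ => norm_nonneg _) (fun k => (hxy k).le)
      tendsto_one_div_add_atTop_nhds_zero_nat
  have hya : Tendsto (y ∘ φ) atTop (𝓝 a) := by
    have := hxa.sub (hxy0.comp hφ.tendsto_atTop)
    simpa [Function.comp_def] using this
  obtain ⟨r, hr, C, hC, hloc⟩ := boundary_local hN hΩ hn ha
  have e1 := hxa.eventually (ball_mem_nhds a hr)
  have e2 := hya.eventually (ball_mem_nhds a hr)
  have e3 := (tendsto_natCast_atTop_atTop (R := ℝ)).comp hφ.tendsto_atTop |>.eventually_ge_atTop C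
  obtain ⟨k, h1, h2, h3⟩ := (e1.and (e2.and e3)).exists
  have h4 := hloc _ (hx (φ k)) _ (hy (φ k)) h1 h2
  have h5 := hbig (φ k)
  have h6 : C * ‖x (φ k) - y (φ k)‖ ^ 2 ≤ (φ k : ℝ) * ‖x (φ k) - y (φ k)‖ ^ 2 :=
    mul_le_mul_of_nonneg_right h3 (by positivity)
  linarith

lemma exists_zeta (hN : 0 < N) {Ω : Set (Euc N)} (hΩ : IsW2Domain hN Ω)
    (hbdd : Bornology.IsBounded Ω)
    {n : Euc N → Euc N} (hn : IsExteriorNormal Ω n) :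
    ∃ ζ : Euc N → ℝ, ContDiff ℝ 1 ζ ∧ (∃ L : ℝ≥0, LipschitzWith L ζ) ∧ (∃ Z, ∀ x, |ζ x| ≤ Z) ∧
      ∀ x ∈ frontier Ω, HasGradientAt ζ (n x) x := by
  have hcomp : IsCompact (frontier Ω) :=
    hbdd.isCompact_closure.of_isClosed_subset isClosed_frontier frontier_subset_closure
  -- open set where the distance is C^1
  have hU : ∃ U : Set (Euc N), IsOpen U ∧ frontier Ω ⊆ U ∧ ContDiffOn ℝ 1 (sdist Ω) U := by
    refine ⟨{x | ContDiffAt ℝ 1 (sdist Ω) x}, ?_, ?_, fun x hx => ContDiffAt.contDiffWithinAt hx⟩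
    · rw [isOpen_iff_mem_nhds]
      intro x hx
      exact ContDiffAt.eventually hx (by simp)
    · intro s hs
      obtain ⟨r, ψ, ψinv, hch⟩ := hΩ.2 s hs
      exact (chart_sdist hN hch).1.contDiffAt (ball_mem_nhds s hch.1)
  obtain ⟨U, hUo, hsubU, hcU⟩ := hU
  obtain ⟨V, hVo, hfV, hVU, hVc⟩ := exists_open_between_and_isCompact_closure hcomp hUo hsubU
  obtain ⟨χ, hχ, -, hsupp, hone⟩ := exists_contMDiff_support_eq_eq_one_iff
    (n := ((1 : ℕ∞))) (modelWithCornersSelf ℝ (Euc N)) hVo isClosed_frontier hfV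
  have hχ' : ContDiff ℝ 1 χ := hχ.contDiff
  have hts : tsupport χ ⊆ U := by rw [tsupport, hsupp]; exact hVU
  have hζc : ContDiff ℝ 1 (fun x => -(χ x * sdist Ω x)) := by
    apply ContDiff.neg
    rw [contDiff_iff_contDiffAt]
    intro x
    by_cases hx : x ∈ U
    · exact hχ'.contDiffAt.mul (hcU.contDiffAt (hUo.mem_nhds hx))
    · have : (fun x => χ x * sdist Ω x) =ᶠ[𝓝 x] fun _ => 0 := by
        have h1 : x ∈ (tsupport χ)ᶜ := fun h => hx (hts h)
        filter_upwards [(isClosed_tsupport χ).isOpen_compl.mem_nhds h1] with w hw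
        rw [image_eq_zero_of_notMem_tsupport hw, zero_mul]
      exact contDiffAt_const.congr_of_eventuallyEq this
  have hζs : HasCompactSupport (fun x => -(χ x * sdist Ω x)) := by
    apply HasCompactSupport.intro (K := closure V) hVc
    intro x hx
    have : χ x = 0 := by
      by_contra h
      exact hx (subset_closure (hsupp ▸ h))
    simp [this]
  refine ⟨_, hζc, hζc.lipschitzWith_of_hasCompactSupport hζs one_ne_zero, ?_, ?_⟩
  · obtain ⟨Z, hZ⟩ := hζs.exists_bound_of_continuous hζc.continuous
    exact ⟨Z, hZ⟩
  · intro x hx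
    have hg := (hn x hx).2
    rw [hasGradientAt_iff_hasFDerivAt] at hg ⊢
    have h1 := (hχ'.differentiable one_ne_zero x).hasFDerivAt
    have h2 := (h1.mul hg).neg
    rw [sdist_frontier hΩ.1 hx, (hone x).1 hx] at h2
    have h3 : -((1:ℝ) • (InnerProductSpace.toDual ℝ (Euc N)) (-n x) + (0:ℝ) • fderiv ℝ χ x)
        = (InnerProductSpace.toDual ℝ (Euc N)) (n x) := by simp
    rw [h3] at h2
    exact h2

/-- Abstract penalization lemma. -/
lemma penalization {E : Type*} [TopologicalSpace E] [FirstCountableTopology E] {S : Set E}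
    (hS : IsCompact S) {F : E → ℝ} (hF : UpperSemicontinuousOn F S) {D : E → ℝ}
    (hD : Continuous D) (hD0 : ∀ q ∈ S, 0 ≤ D q) {pen : ℕ → E → ℝ}
    (hpc : ∀ k, Continuous (pen k))
    (hp0 : ∀ k, ∀ q ∈ S, 0 ≤ pen k q) (hpd : ∀ k, ∀ q ∈ S, D q = 0 → pen k q = 0)
    (hpl : ∀ k : ℕ, ∀ q ∈ S, ((k:ℝ) + 1) * D q - 1 ≤ pen k q)
    {q₀ : E} (hq₀ : q₀ ∈ S) (hDq₀ : D q₀ = 0) :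
    ∃ (z : ℕ → E) (a : E) (φ : ℕ → ℕ), StrictMono φ ∧ (∀ k, z k ∈ S) ∧
      (∀ k, ∀ q ∈ S, F q - pen (φ k) q ≤ F (z k) - pen (φ k) (z k)) ∧ a ∈ S ∧
      Tendsto z atTop (𝓝 a) ∧ D a = 0 ∧ F q₀ ≤ F a ∧
      Tendsto (fun k => pen (φ k) (z k)) atTop (𝓝 0) := by
  have hex : ∀ k, ∃ z ∈ S, IsMaxOn (fun q => F q - pen k q) S z := by
    intro k
    apply UpperSemicontinuousOn.exists_isMaxOn ⟨q₀, hq₀⟩ hS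
    have := hF.add ((hpc k).neg.upperSemicontinuous.upperSemicontinuousOn S)
    simpa [sub_eq_add_neg] using this
  choose z hz hmax using hex
  obtain ⟨a, ha, φ, hφ, hza⟩ := hS.tendsto_subseq hz
  obtain ⟨B, hB⟩ := hF.bddAbove_of_isCompact hS
  have hB' : ∀ q ∈ S, F q ≤ B := fun q hq => hB (mem_image_of_mem F hq)
  have hpenB : ∀ k, ∀ q ∈ S, D q = 0 → pen k (z k) ≤ F (z k) - F q := by
    intro k q hq hq0
    have := hmax k hq
    simp only [mem_ofPred_eq, hpd k q hq hq0] at this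
    linarith
  have hDz : Tendsto (fun k => D (z k)) atTop (𝓝 0) := by
    apply squeeze_zero (fun k => hD0 _ (hz k)) (g := fun k : ℕ => (B - F q₀ + 1) * (1 / ((k:ℝ) + 1)))
    · intro k
      have h1 := hpenB k q₀ hq₀ hDq₀
      have h2 := hpl k _ (hz k)
      have h3 := hB' _ (hz k)
      rw [mul_one_div, le_div_iff₀ (by positivity)]
      linarith [mul_comm (D (z k)) ((k:ℝ) + 1)]
    · simpa using tendsto_one_div_add_atTop_nhds_zero_nat.const_mul (B - F q₀ + 1)
  have hDa : D a = 0 :=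
    tendsto_nhds_unique ((hD.tendsto a).comp hza) (hDz.comp hφ.tendsto_atTop)
  have husc : ∀ e > 0, ∀ᶠ k in atTop, F (z (φ k)) < F a + e := by
    intro e he
    have h1 := hF a ha (F a + e) (by linarith)
    have h2 : Tendsto (z ∘ φ) atTop (𝓝[S] a) :=
      tendsto_nhdsWithin_iff.2 ⟨hza, Eventually.of_forall fun k => hz _⟩
    exact h2.eventually h1
  refine ⟨z ∘ φ, a, φ, hφ, fun k => hz _, fun k q hq => hmax (φ k) hq, ha, hza, hDa, ?_, ?_⟩
  · by_contra! h
    obtain ⟨k, hk⟩ := (husc (F q₀ - F a) (by linarith)).exists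
    have := hpenB (φ k) q₀ hq₀ hDq₀
    have := hp0 (φ k) _ (hz (φ k))
    linarith
  · rw [Metric.tendsto_atTop']
    intro e he
    obtain ⟨k₀, hk₀⟩ := eventually_atTop.1 (husc e he)
    refine ⟨k₀, fun k hk => ?_⟩
    have h1 := hk₀ k hk.le
    have h2 := hpenB (φ k) a ha hDa
    have h3 := hp0 (φ k) _ (hz (φ k))
    rw [Real.dist_eq, sub_zero, Function.comp_apply, abs_of_nonneg h3]
    linarith


/-- Comparison of two nonlocal integrals. -/
lemma integral_compare (hN : 0 < N) {σ : ℝ} (hσ : σ ∈ Ioo (0:ℝ) 1) {R : ℝ}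
    {a b U V : Euc N → ℝ} {E F E' F' : Set (Euc N)} {Cμ κ lam Lam ω : ℝ}
    (hE : MeasurableSet E) (hF : MeasurableSet F)
    (hE' : MeasurableSet E') (hF' : MeasurableSet F')
    (hER : E ⊆ ball 0 R) (hER' : E' ⊆ ball 0 R) (hFR' : F' ⊆ ball 0 R)
    (hEF : E \ F ⊆ E' \ F') (hFE : F \ E ⊆ F' \ E')
    (hC : 0 ≤ Cμ) (hκ : 0 ≤ κ) (hlam : 0 ≤ lam) (hLam : 0 ≤ Lam)
    (ha0 : ∀ z, 0 ≤ a z) (hb0 : ∀ z, 0 ≤ b z)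
    (ha : ∀ z, a z ≤ Cμ * ‖z‖ ^ (-((N : ℝ) + σ))) (hb : ∀ z, b z ≤ Cμ * ‖z‖ ^ (-((N : ℝ) + σ)))
    (hab : ∀ z, |a z - b z| ≤ κ * ‖z‖ ^ (-((N : ℝ) + σ)))
    (hUi : IntegrableOn (fun z => U z * a z) E) (hVi : IntegrableOn (fun z => V z * b z) F)
    (hU : ∀ z ∈ E, U z ≤ Lam * ‖z‖) (hV : ∀ z ∈ F, -(V z) ≤ Lam * ‖z‖)
    (hUV : ∀ z ∈ E ∩ F, U z - V z ≤ lam * ‖z‖)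
    (h1 : ∫ z in E' \ F', Wt N σ z ≤ ω) (h2 : ∫ z in F' \ E', Wt N σ z ≤ ω) :
    (∫ z in E, U z * a z) - ∫ z in F, V z * b z ≤
      (lam * Cμ + Lam * κ) * (∫ z in ball (0 : Euc N) R, Wt N σ z) + 2 * (Lam * Cμ * ω) := by
  have hWR := Wt_integrableOn hN hσ R
  have i1 : Integrable ((ball (0 : Euc N) R).indicator (Wt N σ)) :=
    (integrable_indicator_iff measurableSet_ball).2 hWR
  have i2 : Integrable ((E' \ F').indicator (Wt N σ)) :=
    (integrable_indicator_iff (hE'.diff hF')).2 (hWR.mono_set (sdiff_subset.trans hER'))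
  have i3 : Integrable ((F' \ E').indicator (Wt N σ)) :=
    (integrable_indicator_iff (hF'.diff hE')).2 (hWR.mono_set (sdiff_subset.trans hFR'))
  have hUi' := (integrable_indicator_iff hE).2 hUi
  have hVi' := (integrable_indicator_iff hF).2 hVi
  have key : ∀ z, E.indicator (fun z => U z * a z) z - F.indicator (fun z => V z * b z) z ≤
      (lam * Cμ + Lam * κ) * (ball (0 : Euc N) R).indicator (Wt N σ) z
      + (Lam * Cμ * (E' \ F').indicator (Wt N σ) z + Lam * Cμ * (F' \ E').indicator (Wt N σ) z) := by
    intro z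
    have n1 : 0 ≤ (ball (0 : Euc N) R).indicator (Wt N σ) z :=
      indicator_nonneg (fun _ _ => Wt_nonneg _ _) _
    have n2 : 0 ≤ (E' \ F').indicator (Wt N σ) z := indicator_nonneg (fun _ _ => Wt_nonneg _ _) _
    have n3 : 0 ≤ (F' \ E').indicator (Wt N σ) z := indicator_nonneg (fun _ _ => Wt_nonneg _ _) _
    have c1 : 0 ≤ lam * Cμ + Lam * κ := by positivity
    have c2 : 0 ≤ Lam * Cμ := by positivity
    have m1 := mul_nonneg c1 n1
    have m2 := mul_nonneg c2 n2
    have m3 := mul_nonneg c2 n3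
    set w := ‖z‖ ^ (-((N : ℝ) + σ)) with hw
    have hWz : Wt N σ z = ‖z‖ * w := rfl
    have hz0 := norm_nonneg z
    have hL0 : 0 ≤ Lam * ‖z‖ := by positivity
    have hl0 : 0 ≤ lam * ‖z‖ := by positivity
    by_cases zE : z ∈ E <;> by_cases zF : z ∈ F
    · rw [indicator_of_mem zE, indicator_of_mem zF]
      rw [indicator_of_mem (hER zE)] at m1 ⊢
      have hd := hab z
      rw [← hw] at hd
      have q1 := hU z zE
      have q2 := hV z zF
      have q3 := hUV z ⟨zE, zF⟩
      have q : U z * a z - V z * b z ≤ (lam * Cμ + Lam * κ) * Wt N σ z := by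
        rw [hWz]
        rcases le_total (a z) (b z) with hle | hle
        · have e1 : U z * a z - V z * b z = (U z - V z) * a z + (-(V z)) * (b z - a z) := by ring
          have e2 : (U z - V z) * a z ≤ lam * ‖z‖ * (Cμ * w) :=
            (mul_le_mul_of_nonneg_right q3 (ha0 z)).trans (mul_le_mul_of_nonneg_left (ha z) hl0)
          have e3 : (-(V z)) * (b z - a z) ≤ Lam * ‖z‖ * (κ * w) :=
            (mul_le_mul_of_nonneg_right q2 (by linarith)).trans
              (mul_le_mul_of_nonneg_left (by linarith [(abs_le.1 hd).1]) hL0)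
          nlinarith
        · have e1 : U z * a z - V z * b z = (U z - V z) * b z + U z * (a z - b z) := by ring
          have e2 : (U z - V z) * b z ≤ lam * ‖z‖ * (Cμ * w) :=
            (mul_le_mul_of_nonneg_right q3 (hb0 z)).trans (mul_le_mul_of_nonneg_left (hb z) hl0)
          have e3 : U z * (a z - b z) ≤ Lam * ‖z‖ * (κ * w) :=
            (mul_le_mul_of_nonneg_right q1 (by linarith)).trans
              (mul_le_mul_of_nonneg_left (by linarith [(abs_le.1 hd).2]) hL0)
          nlinarith
      linarith
    · rw [indicator_of_mem zE, indicator_of_notMem zF]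
      rw [indicator_of_mem (hEF ⟨zE, zF⟩)] at m2 ⊢
      have : U z * a z ≤ Lam * Cμ * Wt N σ z := by
        rw [hWz]
        calc U z * a z ≤ Lam * ‖z‖ * (Cμ * w) :=
            (mul_le_mul_of_nonneg_right (hU z zE) (ha0 z)).trans
              (mul_le_mul_of_nonneg_left (ha z) hL0)
          _ = _ := by ring
      linarith
    · rw [indicator_of_notMem zE, indicator_of_mem zF]
      rw [indicator_of_mem (hFE ⟨zF, zE⟩)] at m3 ⊢
      have : -(V z) * b z ≤ Lam * Cμ * Wt N σ z := by
        rw [hWz]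
        calc -(V z) * b z ≤ Lam * ‖z‖ * (Cμ * w) :=
            (mul_le_mul_of_nonneg_right (hV z zF) (hb0 z)).trans
              (mul_le_mul_of_nonneg_left (hb z) hL0)
          _ = _ := by ring
      linarith
    · rw [indicator_of_notMem zE, indicator_of_notMem zF]
      linarith
  have hfin := integral_mono (hUi'.sub hVi')
    ((i1.const_mul (lam * Cμ + Lam * κ)).add ((i2.const_mul (Lam * Cμ)).add
      (i3.const_mul (Lam * Cμ)))) key
  have hl : ∫ z, (E.indicator (fun z => U z * a z) - F.indicator (fun z => V z * b z)) z
      = (∫ z in E, U z * a z) - ∫ z in F, V z * b z := by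
    rw [integral_sub' hUi' hVi', integral_indicator hE, integral_indicator hF]
  rw [hl] at hfin
  refine hfin.trans ?_
  rw [integral_add' (i1.const_mul _) ((i2.const_mul _).add (i3.const_mul _)),
    integral_add' (i2.const_mul _) (i3.const_mul _), integral_const_mul, integral_const_mul,
    integral_const_mul, integral_indicator measurableSet_ball, integral_indicator (hE'.diff hF'),
    integral_indicator (hF'.diff hE')]
  have c2 : 0 ≤ Lam * Cμ := by positivity
  have := mul_le_mul_of_nonneg_left h1 c2
  have := mul_le_mul_of_nonneg_left h2 c2
  linarith

lemma Iin_bound (hN : 0 < N) {Ω : Set (Euc N)} {g : Euc N → Euc N → ℝ} {Cμ Dμ σ : ℝ}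
    (hM : AssumptionM Ω g Cμ Dμ σ) {j : Euc N → Euc N → Euc N} {Aj : ℝ}
    (hJ0 : AssumptionJ0 Ω j Aj) {Cj' Cj Dj : ℝ} (hJ1 : AssumptionJ1 Ω j Cj' Cj Dj)
    {φ : Euc N → ℝ} {B : ℝ} (hB : 0 ≤ B) {x : Euc N} (hx : x ∈ closure Ω)
    (hφ : ∀ y, |φ y - φ x| ≤ B * ‖y - x‖) {ξ : ℝ} :
    |Iin Ω j g ξ φ x| ≤ B * Cj * Cμ * ∫ z in ball (0 : Euc N) ξ, Wt N σ z := by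
  obtain ⟨⟨hC, hσ, hm, hg0, hg⟩, -⟩ := hM
  have hset : {z : Euc N | ‖z‖ < ξ ∧ x + j x z ∈ closure Ω} = ball 0 ξ ∩ Eset Ω j x := by
    ext z; simp [Eset]
  have hW := Wt_integrableOn hN hσ ξ
  have hCj : 0 ≤ Cj := hJ1.2.1.le
  rw [Iin, hset, ← Real.norm_eq_abs]
  calc ‖∫ z in ball 0 ξ ∩ Eset Ω j x, (φ (x + j x z) - φ x) * g x z‖
      ≤ ∫ z in ball 0 ξ ∩ Eset Ω j x, B * Cj * Cμ * Wt N σ z := by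
        apply norm_integral_le_of_norm_le ((hW.mono_set inter_subset_left).const_mul _)
        refine Eventually.of_forall fun z => ?_
        rw [Real.norm_eq_abs, abs_mul, abs_of_nonneg (hg0 x hx z)]
        have h1 := hφ (x + j x z)
        rw [add_sub_cancel_left] at h1
        have h2 := (hJ1.2.2.2.1 x hx z).2
        have h3 : |φ (x + j x z) - φ x| ≤ B * (Cj * ‖z‖) :=
          h1.trans (mul_le_mul_of_nonneg_left h2 hB)
        calc _ ≤ B * (Cj * ‖z‖) * (Cμ * ‖z‖ ^ (-((N : ℝ) + σ))) :=
              mul_le_mul h3 (hg x hx z) (hg0 x hx z) (by positivity)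
          _ = _ := by unfold Wt; ring
    _ = B * Cj * Cμ * ∫ z in ball 0 ξ ∩ Eset Ω j x, Wt N σ z := integral_const_mul _ _
    _ ≤ _ := by
        apply mul_le_mul_of_nonneg_left _ (by positivity)
        exact setIntegral_mono_set hW (Eventually.of_forall fun z => Wt_nonneg _ _)
          inter_subset_left.eventuallyLE

lemma Iout_integrable (hN : 0 < N) {Ω : Set (Euc N)} (hbdd : Bornology.IsBounded Ω)
    {g : Euc N → Euc N → ℝ} {Cμ Dμ σ : ℝ}
    (hM : AssumptionM Ω g Cμ Dμ σ) {j : Euc N → Euc N → Euc N} {Aj : ℝ}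
    (hJ0 : AssumptionJ0 Ω j Aj) {Cj' Cj Dj : ℝ} (hJ1 : AssumptionJ1 Ω j Cj' Cj Dj)
    {u : Euc N → ℝ} {B : ℝ} (hB : ∀ y ∈ closure Ω, |u y| ≤ B)
    (hu : Measurable ((closure Ω).domRestrict u))
    {x : Euc N} (hx : x ∈ closure Ω) {ξ : ℝ} (hξ : 0 < ξ) :
    IntegrableOn (fun z => (u (x + j x z) - u x) * g x z)
      {z : Euc N | ξ ≤ ‖z‖ ∧ x + j x z ∈ closure Ω} := by
  obtain ⟨⟨hC, hσ, hm, hg0, hg⟩, -⟩ := hM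
  obtain ⟨R, hR, hER⟩ := Eset_bdd hbdd hJ1
  have hset : {z : Euc N | ξ ≤ ‖z‖ ∧ x + j x z ∈ closure Ω} = (ball 0 ξ)ᶜ ∩ Eset Ω j x := by
    ext z; simp [Eset]
  have hms : MeasurableSet {z : Euc N | ξ ≤ ‖z‖ ∧ x + j x z ∈ closure Ω} := by
    rw [hset]; exact measurableSet_ball.compl.inter (Eset_meas hJ0 hx)
  have hmeas : Measurable ((closure Ω).indicator u) := by
    refine measurable_of_restrict_of_restrict_compl (s := closure Ω) isClosed_closure.measurableSet ?_ ?_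
    · have : (closure Ω).domRestrict ((closure Ω).indicator u) = (closure Ω).domRestrict u := by
        ext y; simp [Set.domRestrict]
      rw [this]; exact hu
    · have : (closure Ω)ᶜ.domRestrict ((closure Ω).indicator u) = fun _ => 0 := by
        ext y; simp only [Set.domRestrict]; exact indicator_of_notMem y.2 _
      rw [this]; exact measurable_const
  have hjm : Measurable fun z => x + j x z :=
    (continuous_const.add (hJ0 x hx).1.continuous).measurable
  have hfm : Measurable fun z => ((closure Ω).indicator u (x + j x z) - u x) * g x z :=
    ((hmeas.comp hjm).sub measurable_const).mul (hm x)
  have hsub : {z : Euc N | ξ ≤ ‖z‖ ∧ x + j x z ∈ closure Ω} ⊆ ball 0 R := by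
    rw [hset]; exact inter_subset_right.trans (hER x hx)
  have hcongr : EqOn (fun z => ((closure Ω).indicator u (x + j x z) - u x) * g x z)
      (fun z => (u (x + j x z) - u x) * g x z)
      {z : Euc N | ξ ≤ ‖z‖ ∧ x + j x z ∈ closure Ω} := by
    intro z hz
    simp only [indicator_of_mem hz.2]
  refine IntegrableOn.congr_fun ?_ hcongr hms
  refine Measure.integrableOn_of_bounded (M := 2 * B * (Cμ * ξ ^ (-((N : ℝ) + σ)))) ?_
    hfm.aestronglyMeasurable ?_
  · exact ((measure_mono hsub).trans_lt measure_ball_lt_top).ne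
  · refine (ae_restrict_iff' hms).2 (Eventually.of_forall fun z hz => ?_)
    rw [indicator_of_mem hz.2, Real.norm_eq_abs, abs_mul, abs_of_nonneg (hg0 x hx z)]
    have h1 : |u (x + j x z) - u x| ≤ 2 * B := by
      have := hB _ hz.2
      have := hB _ hx
      have := abs_sub (u (x + j x z)) (u x)
      linarith
    have h2 : ‖z‖ ^ (-((N : ℝ) + σ)) ≤ ξ ^ (-((N : ℝ) + σ)) :=
      Real.rpow_le_rpow_of_nonpos hξ hz.1 (by have := hσ.1; have : (0:ℝ) ≤ N := N.cast_nonneg; linarith)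
    exact mul_le_mul h1 ((hg x hx z).trans (mul_le_mul_of_nonneg_left h2 hC.le)) (hg0 x hx z)
      ((abs_nonneg _).trans h1)

lemma usc_slice_measurable {Ω : Set (Euc N)} {u : Euc N → ℝ → ℝ}
    (husc : UpperSemicontinuousOn (fun q : Euc N × ℝ => u q.1 q.2) (closure Ω ×ˢ Ici 0))
    {t : ℝ} (ht : 0 ≤ t) : Measurable ((closure Ω).domRestrict (fun y => u y t)) := by
  apply UpperSemicontinuous.measurable
  have h := upperSemicontinuousOn_iff_restrict.2 husc
  have hc : Continuous fun y : closure Ω =>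
      (⟨((y : Euc N), t), ⟨y.2, ht⟩⟩ : (closure Ω ×ˢ Ici (0:ℝ) : Set (Euc N × ℝ))) := by
    fun_prop
  exact h.comp hc

lemma lsc_slice_measurable {Ω : Set (Euc N)} {u : Euc N → ℝ → ℝ}
    (husc : LowerSemicontinuousOn (fun q : Euc N × ℝ => u q.1 q.2) (closure Ω ×ˢ Ici 0))
    {t : ℝ} (ht : 0 ≤ t) : Measurable ((closure Ω).domRestrict (fun y => u y t)) := by
  apply LowerSemicontinuous.measurable
  have h := lowerSemicontinuous_restrict_iff.2 husc
  have hc : Continuous fun y : closure Ω =>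
      (⟨((y : Euc N), t), ⟨y.2, ht⟩⟩ : (closure Ω ×ˢ Ici (0:ℝ) : Set (Euc N × ℝ))) := by
    fun_prop
  exact h.comp hc


/-- Regularized penalization. -/
def pn (γ ε : ℝ) (h : Euc N) : ℝ := (√(‖h‖ ^ 2 + γ ^ 2) - γ) / ε

/-- Its gradient. -/
def Pg (γ ε : ℝ) (h : Euc N) : Euc N := (1 / (ε * √(‖h‖ ^ 2 + γ ^ 2))) • h

lemma pn_contDiff {γ ε : ℝ} (hγ : 0 < γ) : ContDiff ℝ 1 (pn γ ε : Euc N → ℝ) := by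
  unfold pn
  have : ContDiff ℝ 1 fun h : Euc N => √(‖h‖ ^ 2 + γ ^ 2) :=
    ((contDiff_norm_sq ℝ).add contDiff_const).sqrt (fun h => by positivity)
  exact (this.sub contDiff_const).div_const _

lemma pn_gradient {γ ε : ℝ} (hγ : 0 < γ) (h : Euc N) :
    HasGradientAt (pn γ ε : Euc N → ℝ) (Pg γ ε h) h := by
  rw [hasGradientAt_iff_hasFDerivAt]
  have h1 := ((hasStrictFDerivAt_norm_sq h).hasFDerivAt.add_const (γ ^ 2)).sqrt
    (by positivity : ‖h‖ ^ 2 + γ ^ 2 ≠ 0)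
  have h2 := (h1.sub_const γ).mul_const ε⁻¹
  have h3 : (fun y : Euc N => (√(‖y‖ ^ 2 + γ ^ 2) - γ) * ε⁻¹) = pn γ ε := by
    ext y; rw [pn, div_eq_mul_inv]
  rw [h3] at h2
  have h4 : (InnerProductSpace.toDual ℝ (Euc N)) (Pg γ ε h) =
      ε⁻¹ • (1 / (2 * √(‖h‖ ^ 2 + γ ^ 2))) • 2 • (innerSL ℝ) h := by
    refine ContinuousLinearMap.ext fun k => ?_
    rw [InnerProductSpace.toDual_apply_apply, Pg, real_inner_smul_left]
    simp
    ring
  rw [h4]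
  exact h2

lemma pn_zero {γ ε : ℝ} (hγ : 0 < γ) : pn γ ε (0 : Euc N) = 0 := by
  simp [pn, Real.sqrt_sq hγ.le]

lemma pn_nonneg {γ ε : ℝ} (hγ : 0 < γ) (hε : 0 < ε) (h : Euc N) : 0 ≤ pn γ ε h := by
  have : γ ≤ √(‖h‖ ^ 2 + γ ^ 2) := Real.le_sqrt_of_sq_le (by nlinarith [sq_nonneg ‖h‖])
  exact div_nonneg (by linarith) hε.le

lemma pn_lower {γ ε : ℝ} (hε : 0 < ε) (h : Euc N) : (‖h‖ - γ) / ε ≤ pn γ ε h := by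
  have : ‖h‖ ≤ √(‖h‖ ^ 2 + γ ^ 2) := Real.le_sqrt_of_sq_le (by nlinarith [sq_nonneg γ])
  unfold pn
  gcongr

lemma pn_lip {γ ε : ℝ} (hγ : 0 < γ) (hε : 0 < ε) (h k : Euc N) :
    |pn γ ε h - pn γ ε k| ≤ ‖h - k‖ / ε := by
  have key : ∀ h k : Euc N, √(‖h‖ ^ 2 + γ ^ 2) - √(‖k‖ ^ 2 + γ ^ 2) ≤ ‖h - k‖ := by
    intro h k
    rw [sub_le_iff_le_add]
    apply Real.sqrt_le_iff.2 ⟨by positivity, ?_⟩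
    have h1 : ‖h‖ ≤ ‖h - k‖ + ‖k‖ := by simpa using norm_add_le (h - k) k
    have h2 : ‖k‖ ≤ √(‖k‖ ^ 2 + γ ^ 2) := Real.le_sqrt_of_sq_le (by nlinarith [sq_nonneg γ])
    have h3 := Real.sq_sqrt (by positivity : 0 ≤ ‖k‖ ^ 2 + γ ^ 2)
    have h4 : ‖h‖ ^ 2 ≤ (‖h - k‖ + ‖k‖) ^ 2 := by gcongr
    have := mul_le_mul_of_nonneg_left h2 (norm_nonneg (h - k))
    nlinarith
  have e : pn γ ε h - pn γ ε k = (√(‖h‖ ^ 2 + γ ^ 2) - √(‖k‖ ^ 2 + γ ^ 2)) / ε := by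
    unfold pn; ring
  rw [e, abs_div, abs_of_pos hε]
  gcongr
  rw [abs_le]
  have := key h k
  have := key k h
  rw [norm_sub_rev] at this
  constructor <;> linarith

lemma Pg_lower {γ ε : ℝ} (hγ : 0 < γ) (hε : 0 < ε) {h : Euc N} (hh : γ ≤ ‖h‖) :
    1 / ε ≤ 2 * ‖Pg γ ε h‖ := by
  have hp : 0 < √(‖h‖ ^ 2 + γ ^ 2) := by positivity
  have h1 : √(‖h‖ ^ 2 + γ ^ 2) ≤ 2 * ‖h‖ := by
    apply Real.sqrt_le_iff.2 ⟨by positivity, by nlinarith⟩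
  rw [Pg, norm_smul, Real.norm_eq_abs, abs_of_pos (by positivity)]
  rw [div_le_iff₀ hε]
  have : 2 * (1 / (ε * √(‖h‖ ^ 2 + γ ^ 2)) * ‖h‖) * ε = 2 * ‖h‖ / √(‖h‖ ^ 2 + γ ^ 2) := by
    field_simp
  rw [this, le_div_iff₀ hp]
  linarith

/-- Lower bound on the scalar product with a normal, from the quadratic estimate. -/
lemma Pg_inner {γ ε : ℝ} (hγ : 0 < γ) (hε : 0 < ε) {h nn : Euc N} {C : ℝ} (hC : 0 ≤ C)
    (hq : -(C * ‖h‖ ^ 2) ≤ ⟪h, nn⟫) : -(C * (‖h‖ / ε)) ≤ ⟪Pg γ ε h, nn⟫ := by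
  have hp : 0 < √(‖h‖ ^ 2 + γ ^ 2) := by positivity
  have h2 : ‖h‖ ≤ √(‖h‖ ^ 2 + γ ^ 2) := Real.le_sqrt_of_sq_le (by nlinarith [sq_nonneg γ])
  rw [Pg, real_inner_smul_left]
  have c : 0 < 1 / (ε * √(‖h‖ ^ 2 + γ ^ 2)) := by positivity
  refine le_trans ?_ (mul_le_mul_of_nonneg_left hq c.le)
  have e : 1 / (ε * √(‖h‖ ^ 2 + γ ^ 2)) * -(C * ‖h‖ ^ 2)
      = -(C * (‖h‖ / ε) * (‖h‖ / √(‖h‖ ^ 2 + γ ^ 2))) := by field_simp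
  rw [e]
  have h3 : ‖h‖ / √(‖h‖ ^ 2 + γ ^ 2) ≤ 1 := (div_le_one hp).2 h2
  have h4 : 0 ≤ C * (‖h‖ / ε) := by positivity
  nlinarith

lemma modulus_zero {ω : ℝ → ℝ} (h : IsModulus ω) : ω 0 = 0 := by
  apply le_antisymm _ (h.1 0)
  exact ge_of_tendsto h.2.2 (eventually_nhdsWithin_of_forall fun s hs => h.2.1 (le_of_lt hs))

lemma modulus_small {ω : ℝ → ℝ} (h : IsModulus ω) {e : ℝ} (he : 0 < e) :
    ∃ d > 0, ∀ s, s < d → ω s ≤ e := by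
  have := h.2.2.eventually (gt_mem_nhds he)
  rw [eventually_nhdsWithin_iff, Metric.eventually_nhds_iff] at this
  obtain ⟨d, hd, h1⟩ := this
  refine ⟨d, hd, fun s hs => ?_⟩
  rcases le_or_gt s 0 with h0 | h0
  · exact (h.2.1 h0).trans ((modulus_zero h).le.trans he.le)
  · exact (h1 (by rw [Real.dist_eq, sub_zero, abs_of_pos h0]; exact hs) h0).le

lemma H_ineq {H : Euc N → Euc N → ℝ} {m A Cb C : ℝ} {ω₁ : ℝ → ℝ}
    (hHb : AssumptionHb H m A Cb) (hHc : AssumptionHc H m C ω₁) {μ : ℝ} (hμ : μ ∈ Ioo (0:ℝ) 1)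
    (x y p q : Euc N) (hpq : ‖p - q‖ ≤ 1) :
    H y q - μ * H x (μ⁻¹ • p) ≤ 2 * ω₁ ‖x - y‖ * (‖p‖ + 1) ^ m + C * ‖p - q‖ * (‖p‖ + 1) ^ m
      + (1 - μ) * (-(Cb * (m - 1) * (2:ℝ) ^ (-m) * (‖p‖ + 1) ^ m) + Cb * (m - 1) + A) := by
  obtain ⟨hm, hA, hCb, hb⟩ := hHb
  obtain ⟨hC, hω, hc⟩ := hHc
  have h1 := hb μ hμ x p
  have h2 := hc x y q p
  have hmax : max ‖q‖ ‖p‖ ≤ ‖p‖ + 1 := by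
    apply max_le _ (by linarith)
    have := norm_sub_norm_le q p
    rw [norm_sub_rev] at this
    linarith
  have hmax0 : 0 ≤ max ‖q‖ ‖p‖ := (norm_nonneg p).trans (le_max_right _ _)
  have hp0 := norm_nonneg p
  set G := (‖p‖ + 1) ^ m with hG
  have hG1 : 1 ≤ G := Real.one_le_rpow (by linarith) (by linarith)
  have a1 : (max ‖q‖ ‖p‖) ^ m ≤ G := Real.rpow_le_rpow hmax0 hmax (by linarith)
  have a2 : (max ‖q‖ ‖p‖) ^ (m - 1) ≤ G :=
    (Real.rpow_le_rpow hmax0 hmax (by linarith)).trans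
      (Real.rpow_le_rpow_of_exponent_le (by linarith) (by linarith))
  have a3 : (2:ℝ) ^ (-m) * G ≤ ‖p‖ ^ m + 1 := by
    have e : (2:ℝ) ^ (-m) * G = ((‖p‖ + 1) / 2) ^ m := by
      rw [Real.div_rpow (by linarith) (by norm_num), Real.rpow_neg (by norm_num), hG]
      ring
    rw [e]
    have pm : 0 ≤ ‖p‖ ^ m := Real.rpow_nonneg hp0 _
    rcases le_total ‖p‖ 1 with hle | hle
    · have := Real.rpow_le_one (by positivity : 0 ≤ (‖p‖ + 1) / 2) (by linarith) (by linarith : 0 ≤ m)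
      linarith
    · have := Real.rpow_le_rpow (by positivity : 0 ≤ (‖p‖ + 1) / 2)
        (by linarith : (‖p‖ + 1) / 2 ≤ ‖p‖) (by linarith : 0 ≤ m)
      linarith
  have b1 : ω₁ ‖x - y‖ * (1 + (max ‖q‖ ‖p‖) ^ m) ≤ ω₁ ‖x - y‖ * (2 * G) :=
    mul_le_mul_of_nonneg_left (by linarith) (hω.1 _)
  have b2 : C * ‖q - p‖ * (max ‖q‖ ‖p‖) ^ (m - 1) ≤ C * ‖q - p‖ * G :=
    mul_le_mul_of_nonneg_left a2 (by positivity)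
  rw [norm_sub_rev q p] at b2 h2
  have hcc : 0 < Cb * (m - 1) := mul_pos hCb (by linarith)
  have b3 := mul_le_mul_of_nonneg_left a3 hcc.le
  have hμ1 : 0 ≤ 1 - μ := by linarith [hμ.2]
  have b4 : (1 - μ) * (Cb * (1 - m) * ‖p‖ ^ m + A) ≤
      (1 - μ) * (-(Cb * (m - 1) * (2:ℝ) ^ (-m) * G) + Cb * (m - 1) + A) :=
    mul_le_mul_of_nonneg_left (by nlinarith) hμ1
  linarith


/-- Test functions used in the doubling of variables. -/
def tf (c γ ε η δ : ℝ) (ζ : Euc N → ℝ) (y : Euc N) (τ : ℝ) (x : Euc N) (t : ℝ) : ℝ :=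
  c * (pn γ ε (x - y) + (t - τ) ^ 2 / ε + η * ζ x + δ * t)

lemma tf_contDiff {c γ ε η δ : ℝ} (hγ : 0 < γ) {ζ : Euc N → ℝ} (hζ : ContDiff ℝ 1 ζ)
    (y : Euc N) (τ : ℝ) :
    ContDiff ℝ 1 (fun q : Euc N × ℝ => tf c γ ε η δ ζ y τ q.1 q.2) := by
  unfold tf
  have h1 : ContDiff ℝ 1 (fun q : Euc N × ℝ => pn γ ε (q.1 - y)) :=
    (pn_contDiff hγ).comp (contDiff_fst.sub contDiff_const)
  have h2 : ContDiff ℝ 1 (fun q : Euc N × ℝ => (q.2 - τ) ^ 2 / ε) :=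
    ((contDiff_snd.sub contDiff_const).pow 2).div_const _
  have h3 : ContDiff ℝ 1 (fun q : Euc N × ℝ => η * ζ q.1) :=
    contDiff_const.mul (hζ.comp contDiff_fst)
  have h4 : ContDiff ℝ 1 (fun q : Euc N × ℝ => δ * q.2) :=
    contDiff_const.mul contDiff_snd
  exact contDiff_const.mul (((h1.add h2).add h3).add h4)

lemma tf_deriv {c γ ε η δ : ℝ} {ζ : Euc N → ℝ} (x y : Euc N) (t τ : ℝ) :
    deriv (tf c γ ε η δ ζ y τ x) t = c * (2 * (t - τ) / ε + δ) := by
  have h1 : HasDerivAt (fun s : ℝ => (s - τ) ^ 2 / ε) (2 * (t - τ) / ε) t := by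
    have := (((hasDerivAt_id t).sub_const τ).pow 2).div_const ε
    simpa using this
  have h2 : HasDerivAt (fun s : ℝ => δ * s) δ t := by
    simpa using (hasDerivAt_id t).const_mul δ
  have h3 := (((h1.const_add (pn γ ε (x - y))).add_const (η * ζ x)).add h2).const_mul c
  exact h3.deriv

lemma tf_gradient {c γ ε η δ : ℝ} (hγ : 0 < γ) {ζ : Euc N → ℝ} (hζ : ContDiff ℝ 1 ζ)
    (x y : Euc N) (t τ : ℝ) :
    gradient (fun x' => tf c γ ε η δ ζ y τ x' t) x
      = c • (Pg γ ε (x - y) + η • gradient ζ x) := by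
  apply HasGradientAt.gradient
  rw [hasGradientAt_iff_hasFDerivAt]
  have h1 : HasFDerivAt (fun x' => pn γ ε (x' - y))
      ((InnerProductSpace.toDual ℝ (Euc N)) (Pg γ ε (x - y))) x := by
    have := (hasGradientAt_iff_hasFDerivAt.1 (pn_gradient (ε := ε) hγ (x - y)))
    have h0 := HasFDerivAt.comp x this ((hasFDerivAt_id x).sub_const y)
    rwa [ContinuousLinearMap.comp_id] at h0
  have h2 : HasFDerivAt ζ ((InnerProductSpace.toDual ℝ (Euc N)) (gradient ζ x)) x :=
    hasGradientAt_iff_hasFDerivAt.1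
      ((hζ.differentiable (by norm_num)).differentiableAt.hasGradientAt)
  have h3 := (((h1.add_const ((t - τ) ^ 2 / ε)).add (h2.const_mul η)).add_const (δ * t)).const_mul c
  have e : (InnerProductSpace.toDual ℝ (Euc N)) (c • (Pg γ ε (x - y) + η • gradient ζ x))
      = c • ((InnerProductSpace.toDual ℝ (Euc N)) (Pg γ ε (x - y)) +
        η • (InnerProductSpace.toDual ℝ (Euc N)) (gradient ζ x)) := by
    simp
  rw [e]
  exact h3

lemma tf_lip {c γ ε η δ : ℝ} (hγ : 0 < γ) (hε : 0 < ε) (hη : 0 ≤ η) {ζ : Euc N → ℝ} {L : ℝ≥0}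
    (hL : LipschitzWith L ζ) (x y : Euc N) (t τ : ℝ) (x' : Euc N) :
    |tf c γ ε η δ ζ y τ x' t - tf c γ ε η δ ζ y τ x t| ≤ |c| * (1 / ε + η * L) * ‖x' - x‖ := by
  have h1 := pn_lip hγ hε (x' - y) (x - y)
  rw [sub_sub_sub_cancel_right] at h1
  have h2 : |ζ x' - ζ x| ≤ L * ‖x' - x‖ := by
    have := hL.dist_le_mul x' x
    rwa [Real.dist_eq, dist_eq_norm] at this
  have e : tf c γ ε η δ ζ y τ x' t - tf c γ ε η δ ζ y τ x t
    = c * ((pn γ ε (x' - y) - pn γ ε (x - y)) + η * (ζ x' - ζ x)) := by unfold tf; ring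
  rw [e, abs_mul, mul_assoc]
  gcongr
  calc _ ≤ |pn γ ε (x' - y) - pn γ ε (x - y)| + |η * (ζ x' - ζ x)| := abs_add_le _ _
    _ ≤ ‖x' - x‖ / ε + η * (L * ‖x' - x‖) := by
        rw [abs_mul, abs_of_nonneg hη]; gcongr
    _ = _ := by ring

/-- The doubled functional. -/
def Psi (u v : Euc N → ℝ → ℝ) (μ γ ε η δ s₀ : ℝ) (ζ : Euc N → ℝ)
    (x : Euc N) (t : ℝ) (y : Euc N) (τ : ℝ) : ℝ :=
  (μ * u x t - v y τ - η * ζ x - η * ζ y - δ * (t - s₀) - δ * (τ - s₀))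
    - (pn γ ε (x - y) + (t - τ) ^ 2 / ε)

lemma pn_symm (γ ε : ℝ) (x y : Euc N) : pn γ ε (x - y) = pn γ ε (y - x) := by
  unfold pn; rw [norm_sub_rev]

lemma Pg_symm (γ ε : ℝ) (x y : Euc N) : Pg γ ε (x - y) = - Pg γ ε (y - x) := by
  unfold Pg; rw [norm_sub_rev, ← smul_neg, neg_sub]

/-- The viscosity inequalities at a maximum point of the doubled functional. -/
lemma max_ineq (hN : 0 < N) {Ω : Set (Euc N)} (hΩ : IsOpen Ω)
    {n : Euc N → Euc N} (hn : ∀ x ∈ frontier Ω, ‖n x‖ = 1)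
    {g : Euc N → Euc N → ℝ} {Cμ Dμ σ : ℝ} (hM : AssumptionM Ω g Cμ Dμ σ)
    {j : Euc N → Euc N → Euc N} {Aj : ℝ} (hJ0 : AssumptionJ0 Ω j Aj)
    {Cj' Cj Dj : ℝ} (hJ1 : AssumptionJ1 Ω j Cj' Cj Dj)
    {H : Euc N → Euc N → ℝ} {u v : Euc N → ℝ → ℝ}
    (hsub : IsParSubSol Ω j g n Cj (fun x _ pt r p I => pt - I + H x p) u)
    (hsup : IsParSuperSol Ω j g n Cj (fun x _ pt r p I => pt - I + H x p) v)
    {μ γ ε η δ s₀ T : ℝ} (hμ : μ ∈ Ioo (0:ℝ) 1) (hγ : 0 < γ) (hε : 0 < ε) (hη : 0 < η)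
    (hs₀ : 0 ≤ s₀)
    {ζ : Euc N → ℝ} (hζ : ContDiff ℝ 1 ζ) {L : ℝ≥0} (hL : LipschitzWith L ζ)
    (hζn : ∀ x ∈ frontier Ω, HasGradientAt ζ (n x) x)
    {x y : Euc N} {t τ : ℝ} (hx : x ∈ closure Ω) (hy : y ∈ closure Ω)
    (ht : t ∈ Ioo s₀ T) (hτ : τ ∈ Ioo s₀ T)
    (hmax : ∀ x' ∈ closure Ω, ∀ t' ∈ Icc s₀ T, ∀ y' ∈ closure Ω, ∀ τ' ∈ Icc s₀ T,
      Psi u v μ γ ε η δ s₀ ζ x' t' y' τ' ≤ Psi u v μ γ ε η δ s₀ ζ x t y τ)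
    (hbx : x ∈ frontier Ω → -η < ⟪Pg γ ε (x - y), n x⟫)
    (hby : y ∈ frontier Ω → ⟪Pg γ ε (x - y), n y⟫ < η) {e : ℝ} (he : 0 < e) :
    ∃ ξ > 0, 2 * δ ≤ μ * Iout Ω j g ξ (fun z => u z t) x - Iout Ω j g ξ (fun z => v z τ) y + e
      + (H y (Pg γ ε (x - y) - η • gradient ζ y)
        - μ * H x (μ⁻¹ • (Pg γ ε (x - y) + η • gradient ζ x))) := by
  obtain ⟨hμ0, hμ1⟩ := hμ
  have hσ := hM.1.2.1
  have hCμ := hM.1.1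
  have hCj := hJ1.2.1
  set B : ℝ := (1 / ε + η * L) * Cj * Cμ with hB
  have hB0 : 0 ≤ B := by positivity
  obtain ⟨ξ₀, hξ₀, hW⟩ := Wt_small hN hσ (show 0 < e / (2 * (B + 1)) by positivity)
  set ξ := min ξ₀ (min (min (t - s₀) (T - t)) (min (τ - s₀) (T - τ))) with hξd
  have hξ : 0 < ξ := by
    have := ht.1; have := ht.2; have := hτ.1; have := hτ.2
    simp only [hξd, lt_min_iff]
    refine ⟨hξ₀, ⟨?_, ?_⟩, ?_, ?_⟩ <;> linarith
  have x1 : ξ ≤ ξ₀ := min_le_left _ _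
  have x2 : ξ ≤ t - s₀ := (min_le_right _ _).trans ((min_le_left _ _).trans (min_le_left _ _))
  have x3 : ξ ≤ T - t := (min_le_right _ _).trans ((min_le_left _ _).trans (min_le_right _ _))
  have x4 : ξ ≤ τ - s₀ := (min_le_right _ _).trans ((min_le_right _ _).trans (min_le_left _ _))
  have x5 : ξ ≤ T - τ := (min_le_right _ _).trans ((min_le_right _ _).trans (min_le_right _ _))
  have hWξ := hW ξ hξ x1
  have hBW : B * ∫ z in ball (0 : Euc N) ξ, Wt N σ z ≤ e / 2 := by
    calc _ ≤ B * (e / (2 * (B + 1))) := mul_le_mul_of_nonneg_left hWξ hB0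
      _ ≤ (B + 1) * (e / (2 * (B + 1))) := by gcongr; linarith
      _ = e / 2 := by field_simp
  have htpos : 0 < t := by linarith [ht.1]
  have hτpos : 0 < τ := by linarith [hτ.1]
  refine ⟨ξ, hξ, ?_⟩
  -- subsolution
  have hS : μ⁻¹ * (2 * (t - τ) / ε + δ)
      - (Iin Ω j g ξ (fun x' => tf μ⁻¹ γ ε η δ ζ y τ x' t) x + Iout Ω j g ξ (fun z => u z t) x)
      + H x (μ⁻¹ • (Pg γ ε (x - y) + η • gradient ζ x)) ≤ 0 := by
    have h := hsub ξ hξ (tf μ⁻¹ γ ε η δ ζ y τ) (tf_contDiff hγ hζ y τ) x hx t htpos (by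
      rintro x' ⟨-, hx'⟩ s - hs
      rw [abs_le] at hs
      have h := hmax x' hx' s ⟨by linarith, by linarith⟩ y hy τ ⟨hτ.1.le, hτ.2.le⟩
      unfold Psi at h
      have h' : μ⁻¹ * (μ * u x' s - (pn γ ε (x' - y) + (s - τ) ^ 2 / ε + η * ζ x' + δ * s))
        ≤ μ⁻¹ * (μ * u x t - (pn γ ε (x - y) + (t - τ) ^ 2 / ε + η * ζ x + δ * t)) :=
        mul_le_mul_of_nonneg_left (by linarith) (inv_nonneg.2 hμ0.le)
      rw [mul_sub, mul_sub, inv_mul_cancel_left₀ hμ0.ne', inv_mul_cancel_left₀ hμ0.ne'] at h'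
      exact h')
    rw [tf_deriv, tf_gradient hγ hζ] at h
    by_cases hxΩ : x ∈ Ω
    · exact h.1 hxΩ
    · have hxf : x ∈ frontier Ω := by rw [hΩ.frontier_eq]; exact ⟨hx, hxΩ⟩
      rcases min_le_iff.1 (h.2 hxf) with h | h
      · exact h
      · exfalso
        rw [(hζn x hxf).gradient, real_inner_smul_left, inner_add_left, real_inner_smul_left,
          real_inner_self_eq_norm_sq, hn x hxf] at h
        have := mul_pos (inv_pos.2 hμ0) (show 0 < ⟪Pg γ ε (x - y), n x⟫ + η * 1 ^ 2 by
          linarith [hbx hxf])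
        linarith
  have hT : 0 ≤ (-1) * (2 * (τ - t) / ε + δ)
      - (Iin Ω j g ξ (fun x' => tf (-1) γ ε η δ ζ x t x' τ) y + Iout Ω j g ξ (fun z => v z τ) y)
      + H y (Pg γ ε (x - y) - η • gradient ζ y) := by
    have h := hsup ξ hξ (tf (-1) γ ε η δ ζ x t) (tf_contDiff hγ hζ x t) y hy τ hτpos (by
      rintro y' ⟨-, hy'⟩ s - hs
      rw [abs_le] at hs
      have h := hmax x hx t ⟨ht.1.le, ht.2.le⟩ y' hy' s ⟨by linarith, by linarith⟩
      unfold Psi at h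
      unfold tf
      rw [pn_symm γ ε x y, pn_symm γ ε x y', ← neg_sub s t, ← neg_sub τ t, neg_sq, neg_sq] at h
      linarith)
    rw [tf_deriv, tf_gradient hγ hζ] at h
    have e : (-1 : ℝ) • (Pg γ ε (y - x) + η • gradient ζ y) = Pg γ ε (x - y) - η • gradient ζ y := by
      rw [Pg_symm γ ε x y, neg_one_smul, neg_add]; rfl
    rw [e] at h
    by_cases hyΩ : y ∈ Ω
    · exact h.1 hyΩ
    · have hyf : y ∈ frontier Ω := by rw [hΩ.frontier_eq]; exact ⟨hy, hyΩ⟩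
      rcases le_max_iff.1 (h.2 hyf) with h | h
      · exact h
      · exfalso
        rw [(hζn y hyf).gradient, inner_sub_left, real_inner_smul_left,
          real_inner_self_eq_norm_sq, hn y hyf] at h
        linarith [hby hyf]
  have hI1 := Iin_bound hN hM hJ0 hJ1 (B := |μ⁻¹| * (1 / ε + η * L)) (by positivity) hx
    (fun x' => tf_lip (c := μ⁻¹) (δ := δ) hγ hε hη.le hL x y t τ x') (ξ := ξ)
  have hI2 := Iin_bound hN hM hJ0 hJ1 (B := |(-1:ℝ)| * (1 / ε + η * L)) (by positivity) hy
    (fun x' => tf_lip (c := -1) (δ := δ) hγ hε hη.le hL y x τ t x') (ξ := ξ)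
  rw [abs_of_pos (inv_pos.2 hμ0)] at hI1
  rw [abs_neg, abs_one, one_mul] at hI2
  set W := ∫ z in ball (0 : Euc N) ξ, Wt N σ z
  set I1 := Iin Ω j g ξ (fun x' => tf μ⁻¹ γ ε η δ ζ y τ x' t) x
  set I2 := Iin Ω j g ξ (fun x' => tf (-1) γ ε η δ ζ x t x' τ) y
  have k1 : μ * I1 ≤ e / 2 := by
    have := mul_le_mul_of_nonneg_left ((le_abs_self _).trans hI1) hμ0.le
    have e' : μ * (μ⁻¹ * (1 / ε + η * L) * Cj * Cμ * W) = B * W := by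
      rw [hB]; field_simp
    linarith
  have k2 : -I2 ≤ e / 2 := by
    have := (neg_le_abs _).trans hI2
    linarith
  have hS' := mul_le_mul_of_nonneg_left hS hμ0.le
  have e1 : μ * (μ⁻¹ * (2 * (t - τ) / ε + δ)
      - (I1 + Iout Ω j g ξ (fun z => u z t) x)
      + H x (μ⁻¹ • (Pg γ ε (x - y) + η • gradient ζ x))) = (2 * (t - τ) / ε + δ) - μ * I1
      - μ * Iout Ω j g ξ (fun z => u z t) x
      + μ * H x (μ⁻¹ • (Pg γ ε (x - y) + η • gradient ζ x)) := by
    have := mul_inv_cancel_left₀ hμ0.ne' (2 * (t - τ) / ε + δ)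
    linear_combination this
  rw [e1, mul_zero] at hS'
  have e2 : (-1) * (2 * (τ - t) / ε + δ) = 2 * (t - τ) / ε - δ := by ring
  rw [e2] at hT
  linarith


/-- Comparison of the nonlocal terms at a maximum point of the doubled functional. -/
lemma nonlocal_ineq (hN : 0 < N) {Ω : Set (Euc N)} (hbdd : Bornology.IsBounded Ω)
    {g : Euc N → Euc N → ℝ} {Cμ Dμ σ : ℝ} (hM : AssumptionM Ω g Cμ Dμ σ)
    {j : Euc N → Euc N → Euc N} {Aj : ℝ} (hJ0 : AssumptionJ0 Ω j Aj)
    {Cj' Cj Dj : ℝ} (hJ1 : AssumptionJ1 Ω j Cj' Cj Dj)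
    {u v : Euc N → ℝ → ℝ} {B : ℝ}
    (hub : ∀ x ∈ closure Ω, ∀ t ∈ Ici (0:ℝ), |u x t| ≤ B)
    (hvb : ∀ x ∈ closure Ω, ∀ t ∈ Ici (0:ℝ), |v x t| ≤ B)
    (husc : UpperSemicontinuousOn (fun q : Euc N × ℝ => u q.1 q.2) (closure Ω ×ˢ Ici 0))
    (hlsc : LowerSemicontinuousOn (fun q : Euc N × ℝ => v q.1 q.2) (closure Ω ×ˢ Ici 0))
    {μ γ ε η δ s₀ T R ω : ℝ} (hγ : 0 < γ) (hε : 0 < ε) (hη : 0 < η)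
    (hs₀ : 0 ≤ s₀) (hER : ∀ x ∈ closure Ω, Eset Ω j x ⊆ ball 0 R)
    {ζ : Euc N → ℝ} {L : ℝ≥0} (hL : LipschitzWith L ζ)
    {x y : Euc N} {t τ : ℝ} (hx : x ∈ closure Ω) (hy : y ∈ closure Ω)
    (ht : t ∈ Icc s₀ T) (hτ : τ ∈ Icc s₀ T)
    (hmax : ∀ x' ∈ closure Ω, ∀ t' ∈ Icc s₀ T, ∀ y' ∈ closure Ω, ∀ τ' ∈ Icc s₀ T,
      Psi u v μ γ ε η δ s₀ ζ x' t' y' τ' ≤ Psi u v μ γ ε η δ s₀ ζ x t y τ)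
    (h1 : ∫ z in Eset Ω j x \ Eset Ω j y, Wt N σ z ≤ ω)
    (h2 : ∫ z in Eset Ω j y \ Eset Ω j x, Wt N σ z ≤ ω) {ξ : ℝ} (hξ : 0 < ξ) :
    μ * Iout Ω j g ξ (fun z => u z t) x - Iout Ω j g ξ (fun z => v z τ) y ≤
      ((Dj * ‖x - y‖ / ε + 2 * η * L * Cj) * Cμ + Cj * (1 / ε + η * L) * (Dμ * ‖x - y‖))
        * (∫ z in ball (0 : Euc N) R, Wt N σ z) + 2 * (Cj * (1 / ε + η * L) * Cμ * ω) := by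
  have hσ := hM.1.2.1
  have hCμ := hM.1.1
  have hCj := hJ1.2.1
  have hDj := hJ1.2.2.1
  have hDμ := hM.2.1
  have hset : ∀ x, {z : Euc N | ξ ≤ ‖z‖ ∧ x + j x z ∈ closure Ω} = (ball 0 ξ)ᶜ ∩ Eset Ω j x := by
    intro x; ext z; simp [Eset]
  have hms : ∀ x ∈ closure Ω, MeasurableSet {z : Euc N | ξ ≤ ‖z‖ ∧ x + j x z ∈ closure Ω} := by
    intro x hx
    rw [hset]; exact measurableSet_ball.compl.inter (Eset_meas hJ0 hx)
  have hζL : ∀ a b, ζ a - ζ b ≤ L * ‖a - b‖ := by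
    intro a b
    have := hL.dist_le_mul a b
    rw [Real.dist_eq, dist_eq_norm] at this
    exact (le_abs_self _).trans this
  have hpn : ∀ a b : Euc N, pn γ ε a - pn γ ε b ≤ ‖a - b‖ / ε := fun a b =>
    (le_abs_self _).trans (pn_lip hγ hε a b)
  have ht0 : 0 ≤ t := hs₀.trans ht.1
  have hτ0 : 0 ≤ τ := hs₀.trans hτ.1
  have hiu := Iout_integrable hN hbdd hM hJ0 hJ1 (u := fun z => u z t) (fun z hz => hub z hz t ht0)
    (usc_slice_measurable husc ht0) hx hξ
  have hiv := Iout_integrable hN hbdd hM hJ0 hJ1 (u := fun z => v z τ) (fun z hz => hvb z hz τ hτ0)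
    (lsc_slice_measurable hlsc hτ0) hy hξ
  have hLam : ∀ w z : Euc N, ‖w‖ ≤ Cj * ‖z‖ →
      ‖w‖ / ε + η * (L * ‖w‖) ≤ Cj * (1 / ε + η * L) * ‖z‖ := by
    intro w z hw
    calc _ = (1 / ε + η * L) * ‖w‖ := by ring
      _ ≤ (1 / ε + η * L) * (Cj * ‖z‖) := by gcongr
      _ = _ := by ring
  have key := integral_compare hN hσ (R := R) (a := g x) (b := g y)
    (U := fun z => μ * (u (x + j x z) t - u x t)) (V := fun z => v (y + j y z) τ - v y τ)
    (E := {z : Euc N | ξ ≤ ‖z‖ ∧ x + j x z ∈ closure Ω})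
    (F := {z : Euc N | ξ ≤ ‖z‖ ∧ y + j y z ∈ closure Ω})
    (E' := Eset Ω j x) (F' := Eset Ω j y) (Cμ := Cμ) (κ := Dμ * ‖x - y‖)
    (lam := Dj * ‖x - y‖ / ε + 2 * η * L * Cj) (Lam := Cj * (1 / ε + η * L)) (ω := ω)
    (hms x hx) (hms y hy) (Eset_meas hJ0 hx) (Eset_meas hJ0 hy)
    (fun z hz => hER x hx hz.2) (hER x hx) (hER y hy)
    (fun z hz => ⟨hz.1.2, fun h => hz.2 ⟨hz.1.1, h⟩⟩)
    (fun z hz => ⟨hz.1.2, fun h => hz.2 ⟨hz.1.1, h⟩⟩)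
    hCμ.le (by positivity) (by positivity) (by positivity)
    (hM.1.2.2.2.1 x hx) (hM.1.2.2.2.1 y hy) (hM.1.2.2.2.2 x hx) (hM.1.2.2.2.2 y hy)
    (hM.2.2 x hx y hy)
    (by
      have := hiu.const_mul μ
      refine IntegrableOn.congr_fun this (fun z _ => ?_) (hms x hx)
      ring)
    hiv
    (by
      rintro z ⟨-, hz⟩
      have hm := hmax _ hz t ht y hy τ hτ
      unfold Psi at hm
      have a1 := hpn (x + j x z - y) (x - y)
      rw [sub_sub_sub_cancel_right, add_sub_cancel_left] at a1
      have a2 := mul_le_mul_of_nonneg_left (hζL (x + j x z) x) hη.le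
      rw [add_sub_cancel_left] at a2
      have a3 := hLam _ _ (hJ1.2.2.2.1 x hx z).2
      simp only [mul_sub] at a2 ⊢
      linarith)
    (by
      rintro z ⟨-, hz⟩
      have hm := hmax x hx t ht _ hz τ hτ
      unfold Psi at hm
      have a1 := hpn (x - (y + j y z)) (x - y)
      rw [sub_sub_sub_cancel_left, sub_add_cancel_left, norm_neg] at a1
      have a2 := mul_le_mul_of_nonneg_left (hζL (y + j y z) y) hη.le
      rw [add_sub_cancel_left] at a2
      have a3 := hLam _ _ (hJ1.2.2.2.1 y hy z).2
      simp only [mul_sub] at a2 ⊢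
      linarith)
    (by
      rintro z ⟨⟨-, hz⟩, ⟨-, hz'⟩⟩
      have hm := hmax _ hz t ht _ hz' τ hτ
      unfold Psi at hm
      have a1 := hpn (x + j x z - (y + j y z)) (x - y)
      have e : x + j x z - (y + j y z) - (x - y) = j x z - j y z := by abel
      rw [e] at a1
      have a2 := mul_le_mul_of_nonneg_left (hζL (y + j y z) y) hη.le
      rw [add_sub_cancel_left] at a2
      have a2' := mul_le_mul_of_nonneg_left (hζL (x + j x z) x) hη.le
      rw [add_sub_cancel_left] at a2'
      have a3 : ‖j x z - j y z‖ / ε ≤ Dj * ‖z‖ * ‖x - y‖ / ε := by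
        gcongr; exact hJ1.2.2.2.2 x hx y hy z
      have a4 : η * (L * ‖j x z‖) ≤ η * (L * (Cj * ‖z‖)) := by
        gcongr; exact (hJ1.2.2.2.1 x hx z).2
      have a5 : η * (L * ‖j y z‖) ≤ η * (L * (Cj * ‖z‖)) := by
        gcongr; exact (hJ1.2.2.2.1 y hy z).2
      simp only [mul_sub] at a2 a2' ⊢
      have e2 : (Dj * ‖x - y‖ / ε + 2 * η * L * Cj) * ‖z‖ =
        Dj * ‖z‖ * ‖x - y‖ / ε + η * (L * (Cj * ‖z‖)) + η * (L * (Cj * ‖z‖)) := by ring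
      rw [e2]
      linarith)
    h1 h2
  have e1 : μ * Iout Ω j g ξ (fun z => u z t) x =
      ∫ z in {z : Euc N | ξ ≤ ‖z‖ ∧ x + j x z ∈ closure Ω},
        μ * (u (x + j x z) t - u x t) * g x z := by
    unfold Iout
    rw [← integral_const_mul]
    congr 1; ext z; ring
  rw [e1]
  exact key


lemma gradient_norm_le {ζ : Euc N → ℝ} {L : ℝ≥0} (hL : LipschitzWith L ζ) (x : Euc N) :
    ‖gradient ζ x‖ ≤ L := by
  unfold gradient
  rw [LinearIsometryEquiv.norm_map]
  exact norm_fderiv_le_of_lipschitz ℝ hL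

set_option maxHeartbeats 1000000 in
/-- Contradiction at a maximum point for well chosen parameters. -/
lemma point_contra (hN : 0 < N) {Ω : Set (Euc N)} (hΩ : IsOpen Ω)
    (hbdd : Bornology.IsBounded Ω)
    {n : Euc N → Euc N} (hn : ∀ x ∈ frontier Ω, ‖n x‖ = 1)
    {g : Euc N → Euc N → ℝ} {Cμ Dμ σ : ℝ} (hM : AssumptionM Ω g Cμ Dμ σ)
    {j : Euc N → Euc N → Euc N} {Aj : ℝ} (hJ0 : AssumptionJ0 Ω j Aj)
    {Cj' Cj Dj : ℝ} (hJ1 : AssumptionJ1 Ω j Cj' Cj Dj)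
    {H : Euc N → Euc N → ℝ} {m A Cb C : ℝ} {ω₁ : ℝ → ℝ}
    (hHb : AssumptionHb H m A Cb) (hHc : AssumptionHc H m C ω₁)
    {u v : Euc N → ℝ → ℝ} {B : ℝ}
    (hub : ∀ x ∈ closure Ω, ∀ t ∈ Ici (0:ℝ), |u x t| ≤ B)
    (hvb : ∀ x ∈ closure Ω, ∀ t ∈ Ici (0:ℝ), |v x t| ≤ B)
    (husc : UpperSemicontinuousOn (fun q : Euc N × ℝ => u q.1 q.2) (closure Ω ×ˢ Ici 0))
    (hlsc : LowerSemicontinuousOn (fun q : Euc N × ℝ => v q.1 q.2) (closure Ω ×ˢ Ici 0))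
    (hsub : IsParSubSol Ω j g n Cj (fun x _ pt r p I => pt - I + H x p) u)
    (hsup : IsParSuperSol Ω j g n Cj (fun x _ pt r p I => pt - I + H x p) v)
    {μ γ ε η δ s₀ T R e₁ κ I : ℝ} (hμ : μ ∈ Ioo (0:ℝ) 1) (hγ : 0 < γ) (hε : 0 < ε) (hη : 0 < η)
    (hs₀ : 0 ≤ s₀) (hδ : 0 < δ) (hER : ∀ x ∈ closure Ω, Eset Ω j x ⊆ ball 0 R)
    (hI : I = ∫ z in ball (0 : Euc N) R, Wt N σ z)
    {ζ : Euc N → ℝ} (hζ : ContDiff ℝ 1 ζ) {L : ℝ≥0} (hL : LipschitzWith L ζ)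
    (hζn : ∀ x ∈ frontier Ω, HasGradientAt ζ (n x) x)
    {x y : Euc N} {t τ : ℝ} (hx : x ∈ closure Ω) (hy : y ∈ closure Ω)
    (ht : t ∈ Ioo s₀ T) (hτ : τ ∈ Ioo s₀ T)
    (hmax : ∀ x' ∈ closure Ω, ∀ t' ∈ Icc s₀ T, ∀ y' ∈ closure Ω, ∀ τ' ∈ Icc s₀ T,
      Psi u v μ γ ε η δ s₀ ζ x' t' y' τ' ≤ Psi u v μ γ ε η δ s₀ ζ x t y τ)
    (hbx : x ∈ frontier Ω → -η < ⟪Pg γ ε (x - y), n x⟫)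
    (hby : y ∈ frontier Ω → ⟪Pg γ ε (x - y), n y⟫ < η)
    (hκ1 : ‖x - y‖ / ε ≤ κ) (hκ2 : ‖x - y‖ ≤ κ)
    (p1 : κ * ((Dj * Cμ + Cj * Dμ * (1 + η * L)) * I) ≤ δ / 8)
    (p2 : 2 * η * L * Cj * Cμ * I ≤ δ / 4)
    (p3 : ‖x - y‖ < γ → ∫ z in Eset Ω j x \ Eset Ω j y, Wt N σ z ≤ ε ^ 2)
    (p3' : ‖x - y‖ < γ → ∫ z in Eset Ω j y \ Eset Ω j x, Wt N σ z ≤ ε ^ 2)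
    (p4 : ∫ z in Eset Ω j x \ Eset Ω j y, Wt N σ z ≤ e₁)
    (p4' : ∫ z in Eset Ω j y \ Eset Ω j x, Wt N σ z ≤ e₁) (he₁ : 0 < e₁)
    (p5 : 2 * (Cj * Cμ * (1 + η * L)) * ε ≤ δ / 8) (hε1 : ε ≤ 1)
    (p6 : (1 - μ) * (Cb * (m - 1) + A) ≤ δ / 2)
    (p7 : 6 * Cj * Cμ * e₁ ≤ (1 - μ) * (Cb * (m - 1) * (2:ℝ) ^ (-m)) / 4)
    (p8 : 2 * ω₁ ‖x - y‖ ≤ (1 - μ) * (Cb * (m - 1) * (2:ℝ) ^ (-m)) / 4)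
    (p9 : 2 * η * L * C ≤ (1 - μ) * (Cb * (m - 1) * (2:ℝ) ^ (-m)) / 2)
    (p10 : 2 * η * L ≤ 1) : False := by
  have hCμ := hM.1.1
  have hCj := hJ1.2.1
  have hDj := hJ1.2.2.1
  have hDμ := hM.2.1
  have hI0 : 0 ≤ I := by
    rw [hI]; exact setIntegral_nonneg measurableSet_ball fun z _ => Wt_nonneg _ _
  obtain ⟨ξ, hξ, hmi⟩ := max_ineq hN hΩ hn hM hJ0 hJ1 hsub hsup hμ hγ hε hη hs₀ hζ hL hζn hx hy
    ht hτ hmax hbx hby (show 0 < δ / 8 by linarith)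
  set P := Pg γ ε (x - y) with hP
  set p := P + η • gradient ζ x with hp
  have gx := gradient_norm_le hL x
  have gy := gradient_norm_le hL y
  have hL0 : (0:ℝ) ≤ L := L.2
  have hηL : 0 ≤ η * L := by positivity
  have hpq : ‖p - (P - η • gradient ζ y)‖ ≤ 2 * η * L := by
    have : p - (P - η • gradient ζ y) = η • (gradient ζ x + gradient ζ y) := by
      rw [hp, smul_add]; abel
    rw [this, norm_smul, Real.norm_eq_abs, abs_of_pos hη]
    have := norm_add_le (gradient ζ x) (gradient ζ y)
    have : η * ‖gradient ζ x + gradient ζ y‖ ≤ η * (L + L) :=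
      mul_le_mul_of_nonneg_left (by linarith) hη.le
    linarith
  have hPp : ‖P‖ ≤ ‖p‖ + 1 := by
    have : P = p - η • gradient ζ x := by rw [hp]; abel
    rw [this]
    have h := norm_sub_le p (η • gradient ζ x)
    rw [norm_smul, Real.norm_eq_abs, abs_of_pos hη] at h
    have : η * ‖gradient ζ x‖ ≤ η * L := mul_le_mul_of_nonneg_left gx hη.le
    linarith
  have hH := H_ineq hHb hHc hμ x y p (P - η • gradient ζ y) (hpq.trans p10)
  have hm1 := hHb.1
  have hC0 := hHc.1
  have hp0 := norm_nonneg p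
  have hGp : ‖p‖ + 1 ≤ (‖p‖ + 1) ^ m := by
    have := Real.rpow_le_rpow_of_exponent_le (by linarith : 1 ≤ ‖p‖ + 1) hm1.le
    rwa [Real.rpow_one] at this
  set G := (‖p‖ + 1) ^ m with hG
  have hG1 : 1 ≤ G := by linarith
  set c := Cb * (m - 1) * (2:ℝ) ^ (-m) with hc
  -- nonlocal term
  have hnl : ∀ ω, ∫ z in Eset Ω j x \ Eset Ω j y, Wt N σ z ≤ ω →
      ∫ z in Eset Ω j y \ Eset Ω j x, Wt N σ z ≤ ω →
      μ * Iout Ω j g ξ (fun z => u z t) x - Iout Ω j g ξ (fun z => v z τ) y ≤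
      ((Dj * ‖x - y‖ / ε + 2 * η * L * Cj) * Cμ + Cj * (1 / ε + η * L) * (Dμ * ‖x - y‖))
        * I + 2 * (Cj * (1 / ε + η * L) * Cμ * ω) := by
    intro ω h1 h2
    rw [hI]
    exact nonlocal_ineq hN hbdd hM hJ0 hJ1 hub hvb husc hlsc hγ hε hη hs₀ hER hL hx hy
      ⟨ht.1.le, ht.2.le⟩ ⟨hτ.1.le, hτ.2.le⟩ hmax h1 h2 hξ
  have t1 : ((Dj * ‖x - y‖ / ε + 2 * η * L * Cj) * Cμ + Cj * (1 / ε + η * L) * (Dμ * ‖x - y‖))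
        * I ≤ δ / 8 + δ / 4 := by
    have e : ((Dj * ‖x - y‖ / ε + 2 * η * L * Cj) * Cμ + Cj * (1 / ε + η * L) * (Dμ * ‖x - y‖))
        * I = (‖x - y‖ / ε * (Dj * Cμ + Cj * Dμ) + ‖x - y‖ * (Cj * Dμ * (η * L))) * I
          + 2 * η * L * Cj * Cμ * I := by ring
    have e2 : (‖x - y‖ / ε * (Dj * Cμ + Cj * Dμ) + ‖x - y‖ * (Cj * Dμ * (η * L))) * I
        ≤ (κ * (Dj * Cμ + Cj * Dμ) + κ * (Cj * Dμ * (η * L))) * I := by gcongr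
    have e3 : (κ * (Dj * Cμ + Cj * Dμ) + κ * (Cj * Dμ * (η * L))) * I
      = κ * ((Dj * Cμ + Cj * Dμ * (1 + η * L)) * I) := by ring
    linarith
  have t2 : μ * Iout Ω j g ξ (fun z => u z t) x - Iout Ω j g ξ (fun z => v z τ) y ≤
      δ / 8 + δ / 4 + δ / 8 + 6 * Cj * Cμ * e₁ * G := by
    have pos : 0 ≤ 6 * Cj * Cμ * e₁ * G := by positivity
    rcases lt_or_ge ‖x - y‖ γ with hlt | hge
    · have h := hnl _ (p3 hlt) (p3' hlt)
      have e : 2 * (Cj * (1 / ε + η * L) * Cμ * ε ^ 2) ≤ 2 * (Cj * Cμ * (1 + η * L)) * ε := by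
        have e' : 2 * (Cj * (1 / ε + η * L) * Cμ * ε ^ 2)
          = 2 * (Cj * Cμ * (1 + η * L * ε)) * ε := by field_simp
        rw [e']
        have : η * L * ε ≤ η * L := mul_le_of_le_one_right hηL hε1
        gcongr
      linarith
    · have h := hnl _ p4 p4'
      have hPl := Pg_lower hγ hε hge
      have e : 2 * (Cj * (1 / ε + η * L) * Cμ * e₁) ≤ 2 * (Cj * (3 * G) * Cμ * e₁) := by
        gcongr
        linarith
      linarith
  have t3 : C * ‖p - (P - η • gradient ζ y)‖ * G ≤ 2 * η * L * C * G := by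
    have := mul_le_mul_of_nonneg_left hpq hC0.le
    have := mul_le_mul_of_nonneg_right this (by linarith : 0 ≤ G)
    linarith
  have g1 := mul_le_mul_of_nonneg_right p7 (by linarith : 0 ≤ G)
  have g2 := mul_le_mul_of_nonneg_right p8 (by linarith : 0 ≤ G)
  have g3 := mul_le_mul_of_nonneg_right p9 (by linarith : 0 ≤ G)
  have e5 : (1 - μ) * (-(c * G) + Cb * (m - 1) + A) = -((1 - μ) * c * G)
    + (1 - μ) * (Cb * (m - 1) + A) := by ring
  rw [e5] at hH
  linarith


lemma ev_small (a : ℝ) {b : ℝ} (hb : 0 < b) : ∀ᶠ s in 𝓝[>] (0:ℝ), a * s < b := by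
  have : Tendsto (fun s : ℝ => a * s) (𝓝[>] 0) (𝓝 (a * 0)) :=
    ((continuous_const.mul continuous_id).tendsto 0).mono_left nhdsWithin_le_nhds
  rw [mul_zero] at this
  exact this.eventually (gt_mem_nhds hb)

lemma ev_pos : ∀ᶠ s in 𝓝[>] (0:ℝ), 0 < s := eventually_mem_nhdsWithin

lemma F_usc {Ω : Set (Euc N)} {u v : Euc N → ℝ → ℝ}
    (husc : UpperSemicontinuousOn (fun q : Euc N × ℝ => u q.1 q.2) (closure Ω ×ˢ Ici 0))
    (hlsc : LowerSemicontinuousOn (fun q : Euc N × ℝ => v q.1 q.2) (closure Ω ×ˢ Ici 0))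
    {μ η δ s₀ T : ℝ} (hμ : 0 < μ) (hs₀ : 0 ≤ s₀) {ζ : Euc N → ℝ} (hζ : Continuous ζ) :
    UpperSemicontinuousOn (fun q : Euc N × ℝ × Euc N × ℝ =>
      μ * u q.1 q.2.1 - v q.2.2.1 q.2.2.2 - η * ζ q.1 - η * ζ q.2.2.1 - δ * (q.2.1 - s₀)
        - δ * (q.2.2.2 - s₀)) (closure Ω ×ˢ Icc s₀ T ×ˢ closure Ω ×ˢ Icc s₀ T) := by
  have h1 : UpperSemicontinuousOn (fun q : Euc N × ℝ × Euc N × ℝ => μ * u q.1 q.2.1)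
      (closure Ω ×ˢ Icc s₀ T ×ˢ closure Ω ×ˢ Icc s₀ T) := by
    intro q hq y hy
    have hlt : u q.1 q.2.1 < y / μ := by rw [lt_div_iff₀ hμ]; linarith
    have := husc (q.1, q.2.1) ⟨hq.1, hs₀.trans hq.2.1.1⟩ (y / μ) hlt
    have hc : ContinuousWithinAt (fun q : Euc N × ℝ × Euc N × ℝ => (q.1, q.2.1))
      (closure Ω ×ˢ Icc s₀ T ×ˢ closure Ω ×ˢ Icc s₀ T) q :=
      (by fun_prop : Continuous fun q : Euc N × ℝ × Euc N × ℝ => (q.1, q.2.1)).continuousWithinAt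
    have ht := hc.tendsto_nhdsWithin (t := closure Ω ×ˢ Ici 0)
      (fun a ha => ⟨ha.1, hs₀.trans ha.2.1.1⟩)
    filter_upwards [ht.eventually this] with a ha
    rw [lt_div_iff₀ hμ] at ha
    linarith
  have h2 : UpperSemicontinuousOn (fun q : Euc N × ℝ × Euc N × ℝ => -v q.2.2.1 q.2.2.2)
      (closure Ω ×ˢ Icc s₀ T ×ˢ closure Ω ×ˢ Icc s₀ T) := by
    intro q hq y hy
    have hlt : -y < v q.2.2.1 q.2.2.2 := by linarith
    have := hlsc (q.2.2.1, q.2.2.2) ⟨hq.2.2.1, hs₀.trans hq.2.2.2.1⟩ (-y) hlt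
    have hc : ContinuousWithinAt (fun q : Euc N × ℝ × Euc N × ℝ => (q.2.2.1, q.2.2.2))
      (closure Ω ×ˢ Icc s₀ T ×ˢ closure Ω ×ˢ Icc s₀ T) q :=
      (by fun_prop : Continuous fun q : Euc N × ℝ × Euc N × ℝ =>
        (q.2.2.1, q.2.2.2)).continuousWithinAt
    have ht := hc.tendsto_nhdsWithin (t := closure Ω ×ˢ Ici 0)
      (fun a ha => ⟨ha.2.2.1, hs₀.trans ha.2.2.2.1⟩)
    filter_upwards [ht.eventually this] with a ha
    linarith
  have h3 : Continuous (fun q : Euc N × ℝ × Euc N × ℝ =>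
      - η * ζ q.1 - η * ζ q.2.2.1 - δ * (q.2.1 - s₀) - δ * (q.2.2.2 - s₀)) := by fun_prop
  have h4 := (h1.add h2).add (h3.upperSemicontinuous.upperSemicontinuousOn
    (closure Ω ×ˢ Icc s₀ T ×ˢ closure Ω ×ˢ Icc s₀ T))
  have e : (fun q : Euc N × ℝ × Euc N × ℝ =>
      μ * u q.1 q.2.1 - v q.2.2.1 q.2.2.2 - η * ζ q.1 - η * ζ q.2.2.1 - δ * (q.2.1 - s₀)
        - δ * (q.2.2.2 - s₀)) = fun q => (μ * u q.1 q.2.1 + -v q.2.2.1 q.2.2.2) +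
        (- η * ζ q.1 - η * ζ q.2.2.1 - δ * (q.2.1 - s₀) - δ * (q.2.2.2 - s₀)) := by
    ext q; ring
  rw [e]
  exact h4

set_option maxHeartbeats 1600000 in
/-- The core comparison argument. -/
lemma no_excess (hN : 0 < N) {Ω : Set (Euc N)} (hΩ : IsW2Domain hN Ω)
    (hbdd : Bornology.IsBounded Ω)
    {n : Euc N → Euc N} (hn : IsExteriorNormal Ω n)
    {g : Euc N → Euc N → ℝ} {Cμ Dμ σ : ℝ} (hM : AssumptionM Ω g Cμ Dμ σ)
    {j : Euc N → Euc N → Euc N} {Aj : ℝ} (hJ0 : AssumptionJ0 Ω j Aj)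
    {Cj' Cj Dj : ℝ} (hJ1 : AssumptionJ1 Ω j Cj' Cj Dj)
    {H : Euc N → Euc N → ℝ} {m A Cb C : ℝ} {ω₁ : ℝ → ℝ}
    (hHb : AssumptionHb H m A Cb) (hHc : AssumptionHc H m C ω₁)
    {u v : Euc N → ℝ → ℝ} {B : ℝ}
    (hub : ∀ x ∈ closure Ω, ∀ t ∈ Ici (0:ℝ), |u x t| ≤ B)
    (hvb : ∀ x ∈ closure Ω, ∀ t ∈ Ici (0:ℝ), |v x t| ≤ B)
    (husc : UpperSemicontinuousOn (fun q : Euc N × ℝ => u q.1 q.2) (closure Ω ×ˢ Ici 0))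
    (hlsc : LowerSemicontinuousOn (fun q : Euc N × ℝ => v q.1 q.2) (closure Ω ×ˢ Ici 0))
    (hsub : IsParSubSol Ω j g n Cj (fun x _ pt r p I => pt - I + H x p) u)
    (hsup : IsParSuperSol Ω j g n Cj (fun x _ pt r p I => pt - I + H x p) v)
    {s₀ t₀ K : ℝ} (hs₀ : 0 ≤ s₀) (hst : s₀ < t₀)
    (hK : ∀ x ∈ closure Ω, u x s₀ - v x s₀ ≤ K)
    {x₀ : Euc N} (hx₀ : x₀ ∈ closure Ω) (hx₀K : K < u x₀ t₀ - v x₀ t₀) : False := by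
  have hCμ := hM.1.1
  have hσ := hM.1.2.1
  have hCj := hJ1.2.1
  have hDj := hJ1.2.2.1
  have hDμ := hM.2.1
  have hm1 := hHb.1
  have hA := hHb.2.1
  have hCb := hHb.2.2.1
  have hC0 := hHc.1
  have hB0 : 0 ≤ B := (abs_nonneg _).trans (hub x₀ hx₀ s₀ hs₀)
  obtain ⟨ζ, hζ, ⟨L, hL⟩, ⟨Z, hZ⟩, hζn⟩ := exists_zeta hN hΩ hbdd hn
  obtain ⟨r, hr, Cq, hCq, hquad⟩ := boundary_quad hN hΩ hbdd hn
  obtain ⟨R, hR, hER⟩ := Eset_bdd hbdd hJ1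
  set I := ∫ z in ball (0 : Euc N) R, Wt N σ z with hI
  set θ := u x₀ t₀ - v x₀ t₀ - K with hθd
  have hθ : 0 < θ := by rw [hθd]; linarith
  have hts : 0 < t₀ - s₀ := by linarith
  -- parameters
  obtain ⟨δ, hδ, hδ1⟩ := (ev_pos.and (ev_small (2 * (t₀ - s₀)) (show 0 < θ / 4 by linarith))).exists
  obtain ⟨ν, hν, hν1, hν2, hν3⟩ := (ev_pos.and ((ev_small 1 one_pos).and
    ((ev_small B (show 0 < θ / 8 by linarith)).and
      (ev_small (Cb * (m - 1) + A) (show 0 < δ / 2 by linarith))))).exists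
  obtain ⟨μ, hμν⟩ : ∃ μ, μ = 1 - ν := ⟨_, rfl⟩
  have hμ : μ ∈ Ioo (0:ℝ) 1 := ⟨by linarith, by linarith⟩
  obtain ⟨c, hc⟩ : ∃ c, c = (1 - μ) * (Cb * (m - 1) * (2:ℝ) ^ (-m)) := ⟨_, rfl⟩
  have hc0 : 0 < c := by
    have h1 : 0 < 1 - μ := by linarith
    have h2 : 0 < m - 1 := by linarith
    rw [hc]; positivity
  obtain ⟨η, hη, hη1, hη2, hη3, hη4⟩ := (ev_pos.and ((ev_small (2 * Z) (show 0 < θ / 8 by linarith)).and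
    ((ev_small (2 * L) one_pos).and ((ev_small (2 * L * C) (show 0 < c / 2 by linarith)).and
      (ev_small (2 * L * Cj * Cμ * I) (show 0 < δ / 4 by linarith)))))).exists
  obtain ⟨e₁, he₁, he₁c⟩ := (ev_pos.and (ev_small (6 * Cj * Cμ) (show 0 < c / 4 by linarith))).exists
  obtain ⟨κ, hκ, hκ1, hκ2⟩ := (ev_pos.and ((ev_small ((Dj * Cμ + Cj * Dμ * (1 + η * L)) * I)
    (show 0 < δ / 8 by linarith)).and (ev_small Cq hη))).exists
  obtain ⟨γ₁, hγ₁, hsd⟩ := setdiff_modulus hN hΩ hbdd hσ hJ0 hJ1 he₁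
  obtain ⟨d₁, hd₁, hω₁⟩ := modulus_small hHc.2.1 (show 0 < c / 8 by linarith)
  obtain ⟨T, hT⟩ : ∃ T, T = t₀ + (2 * B + θ + |K| + 1) / δ := ⟨_, rfl⟩
  have hTt : t₀ < T := by
    have : 0 < (2 * B + θ + |K| + 1) / δ := by positivity
    linarith
  have hTδ : 2 * B + θ + |K| + 1 ≤ δ * (T - s₀) := by
    have e : δ * (T - s₀) = δ * (t₀ - s₀) + (2 * B + θ + |K| + 1) := by
      rw [hT]; field_simp; ring
    have := mul_pos hδ hts
    linarith
  -- sequences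
  set ε : ℕ → ℝ := fun k => 1 / ((k:ℝ) + 1) with hεd
  have hε : ∀ k, 0 < ε k := fun k => by simp only [hεd]; positivity
  have hε1 : ∀ k, ε k ≤ 1 := fun k => by
    simp only [hεd]
    rw [div_le_one (by positivity)]
    have : (0:ℝ) ≤ k := k.cast_nonneg
    linarith
  choose γ' hγ' hγ'sd using fun k => setdiff_modulus hN hΩ hbdd hσ hJ0 hJ1 (pow_pos (hε k) 2)
  set γ : ℕ → ℝ := fun k => min (γ' k) (ε k ^ 2) with hγd
  have hγ : ∀ k, 0 < γ k := fun k => lt_min (hγ' k) (pow_pos (hε k) 2)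
  have hγε : ∀ k, γ k / ε k ≤ ε k := fun k => by
    rw [div_le_iff₀ (hε k), ← sq]; exact min_le_right _ _
  set S : Set (Euc N × ℝ × Euc N × ℝ) := closure Ω ×ˢ Icc s₀ T ×ˢ closure Ω ×ˢ Icc s₀ T with hSd
  have hScomp : IsCompact S :=
    hbdd.isCompact_closure.prod (isCompact_Icc.prod (hbdd.isCompact_closure.prod isCompact_Icc))
  set F : Euc N × ℝ × Euc N × ℝ → ℝ := fun q =>
    μ * u q.1 q.2.1 - v q.2.2.1 q.2.2.2 - η * ζ q.1 - η * ζ q.2.2.1 - δ * (q.2.1 - s₀)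
        - δ * (q.2.2.2 - s₀) with hFd
  have hF : UpperSemicontinuousOn F S := F_usc husc hlsc hμ.1 hs₀ hζ.continuous
  set D : Euc N × ℝ × Euc N × ℝ → ℝ := fun q => ‖q.1 - q.2.2.1‖ + (q.2.1 - q.2.2.2) ^ 2 with hDd
  set pen : ℕ → Euc N × ℝ × Euc N × ℝ → ℝ := fun k q =>
    pn (γ k) (ε k) (q.1 - q.2.2.1) + (q.2.1 - q.2.2.2) ^ 2 / ε k with hpend
  have hpnlow : ∀ k (h : Euc N), ‖h‖ / ε k - ε k ≤ pn (γ k) (ε k) h := by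
    intro k h
    have h1 := pn_lower (γ := γ k) (hε k) h
    rw [sub_div] at h1
    linarith [hγε k]
  obtain ⟨z, a, φ, hφ, hzS, hzmax, haS, hza, hDa, hFa, hpen⟩ := penalization hScomp hF
    (D := D) (by fun_prop) (fun q _ => by simp only [hDd]; positivity) (pen := pen)
    (fun k => by
      have : Continuous (pn (γ k) (ε k) : Euc N → ℝ) := (pn_contDiff (hγ k)).continuous
      simp only [hpend]
      fun_prop)
    (fun k q _ => by
      have := pn_nonneg (hγ k) (hε k) (q.1 - q.2.2.1)
      have := hε k
      simp only [hpend]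
      positivity)
    (fun k q _ hq => by
      simp only [hDd] at hq
      have h1 : ‖q.1 - q.2.2.1‖ = 0 := by
        have := norm_nonneg (q.1 - q.2.2.1); have := sq_nonneg (q.2.1 - q.2.2.2); linarith
      have h2 : (q.2.1 - q.2.2.2) ^ 2 = 0 := by linarith
      simp only [hpend]
      rw [h2, norm_eq_zero.1 h1, pn_zero (hγ k)]; simp)
    (fun k q _ => by
      have h1 := hpnlow k (q.1 - q.2.2.1)
      have h2 : ∀ s : ℝ, s / ε k = ((k:ℝ) + 1) * s := fun s => by
        simp only [hεd]; field_simp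
      simp only [hpend, hDd]
      rw [h2] at h1 ⊢
      linarith [hε1 k])
    (q₀ := (x₀, t₀, x₀, t₀)) ⟨hx₀, ⟨hst.le, hTt.le⟩, hx₀, ⟨hst.le, hTt.le⟩⟩ (by simp [hDd])
  have hζ' : ∀ x, |η * ζ x| ≤ θ / 16 := fun x => by
    rw [abs_mul, abs_of_pos hη]
    have := mul_le_mul_of_nonneg_left (hZ x) hη.le
    linarith
  have hμu : ∀ x ∈ closure Ω, ∀ t ∈ Ici (0:ℝ), |μ * u x t - u x t| ≤ θ / 8 := fun x hx t ht => by
    have e : μ * u x t - u x t = -(ν * u x t) := by rw [hμν]; ring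
    rw [e, abs_neg, abs_mul, abs_of_pos hν]
    have := mul_le_mul_of_nonneg_left (hub x hx t ht) hν.le
    linarith
  have hF0 : K + θ / 2 ≤ F (x₀, t₀, x₀, t₀) := by
    have h1 := abs_le.1 (hζ' x₀)
    have h2 := abs_le.1 (hμu x₀ hx₀ t₀ (hs₀.trans hst.le))
    simp only [hFd]
    linarith
  obtain ⟨xa, ta, ya, τa⟩ := a
  obtain ⟨hxa, hta, hya, hτa⟩ := haS
  simp only at hxa hta hya hτa
  have hxy : xa = ya ∧ ta = τa := by
    simp only [hDd] at hDa
    have h0 := norm_nonneg (xa - ya)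
    have h0' := sq_nonneg (ta - τa)
    refine ⟨sub_eq_zero.1 (norm_eq_zero.1 (by linarith)), sub_eq_zero.1 (pow_eq_zero_iff (two_ne_zero) |>.1 (by linarith))⟩
  obtain ⟨rfl, rfl⟩ := hxy
  have hFa' := hF0.trans hFa
  simp only [hFd] at hFa'
  have hta0 : 0 ≤ ta := hs₀.trans hta.1
  have b1 := abs_le.1 (hζ' xa)
  have b2 := abs_le.1 (hμu xa hxa ta hta0)
  have htaI : ta ∈ Ioo s₀ T := by
    constructor
    · refine lt_of_le_of_ne hta.1 fun h => ?_
      have h3 := hK xa hxa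
      rw [← h] at hFa' b2
      rw [sub_self, mul_zero] at hFa'
      linarith
    · refine lt_of_le_of_ne hta.2 fun h => ?_
      have h3 := abs_le.1 (hub xa hxa ta hta0)
      have h4 := abs_le.1 (hvb xa hxa ta hta0)
      have h5 := neg_abs_le K
      have h6 := abs_nonneg K
      rw [← h] at hTδ
      linarith
  -- limits
  have hzx : Tendsto (fun k => (z k).1 - (z k).2.2.1) atTop (𝓝 0) := by
    have hc : Continuous fun q : Euc N × ℝ × Euc N × ℝ => q.1 - q.2.2.1 := by fun_prop
    have := (hc.tendsto _).comp hza
    simp only [sub_self] at this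
    exact this
  have hzt : Tendsto (fun k => (z k).2.1) atTop (𝓝 ta) := by
    have hc : Continuous fun q : Euc N × ℝ × Euc N × ℝ => q.2.1 := by fun_prop
    exact (hc.tendsto _).comp hza
  have hzτ : Tendsto (fun k => (z k).2.2.2) atTop (𝓝 ta) := by
    have hc : Continuous fun q : Euc N × ℝ × Euc N × ℝ => q.2.2.2 := by fun_prop
    exact (hc.tendsto _).comp hza
  have hεlim : Tendsto (fun k => ε (φ k)) atTop (𝓝 0) :=
    (tendsto_one_div_add_atTop_nhds_zero_nat (𝕜 := ℝ)).comp hφ.tendsto_atTop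
  have hsum : Tendsto (fun k => pen (φ k) (z k) + ε (φ k)) atTop (𝓝 0) := by
    simpa using hpen.add hεlim
  have hnorm : Tendsto (fun k => ‖(z k).1 - (z k).2.2.1‖) atTop (𝓝 0) := by
    simpa using hzx.norm
  have hp5 : Tendsto (fun k => 2 * (Cj * Cμ * (1 + η * L)) * ε (φ k)) atTop (𝓝 0) := by
    simpa using hεlim.const_mul (2 * (Cj * Cμ * (1 + η * L)))
  have hmin : 0 < min (min κ r) (min d₁ γ₁) := lt_min (lt_min hκ hr) (lt_min hd₁ hγ₁)
  obtain ⟨k, k1, k2, k3, k4, k5⟩ := ((hzt.eventually (isOpen_Ioo.mem_nhds htaI)).and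
    ((hzτ.eventually (isOpen_Ioo.mem_nhds htaI)).and
    ((hsum.eventually (gt_mem_nhds hκ)).and
    ((hnorm.eventually (gt_mem_nhds hmin)).and
    (hp5.eventually (gt_mem_nhds (show 0 < δ / 8 by linarith))))))).exists
  obtain ⟨hzx', hzt', hzy', hzτ'⟩ := hzS k
  have hmaxk := hzmax k
  generalize z k = zz at *
  obtain ⟨x, t, y, τ⟩ := zz
  generalize φ k = i at *
  simp only [lt_min_iff] at k1 k2 k3 k4 k5 hzx' hzy' hmaxk
  obtain ⟨⟨q1, q2⟩, q3, q4⟩ := k4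
  have hhε : ‖x - y‖ / ε i ≤ κ := by
    have h1 := hpnlow i (x - y)
    simp only [hpend] at k3
    have h2 : 0 ≤ (t - τ) ^ 2 / ε i := by have := hε i; positivity
    linarith
  have q2' : ‖y - x‖ < r := by rwa [norm_sub_rev]
  have hCk : Cq * (‖x - y‖ / ε i) < η := by
    have := mul_le_mul_of_nonneg_left hhε hCq
    linarith
  refine point_contra hN hΩ.1 hbdd (fun x hx => (hn x hx).1) hM hJ0 hJ1 hHb hHc hub hvb husc hlsc
    hsub hsup (x := x) (y := y) (t := t) (τ := τ) (e₁ := e₁) (κ := κ) (T := T) (δ := δ)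
    hμ (hγ i) (hε i) hη hs₀ hδ hER hI hζ hL hζn hzx' hzy' k1 k2
    ?_ ?_ ?_ hhε q1.le ?_ ?_ ?_ ?_ (hsd x hzx' y hzy' q4)
    (hsd y hzy' x hzx' (by rwa [norm_sub_rev])) he₁ k5.le (hε1 i) ?_ ?_ ?_ ?_ ?_
  · intro x' hx' t' ht' y' hy' τ' hτ'
    exact hmaxk (x', t', y', τ') ⟨hx', ht', hy', hτ'⟩
  · intro hxf
    have := Pg_inner (hγ i) (hε i) hCq (hquad x hxf y hzy' q2)
    linarith
  · intro hyf
    have := Pg_inner (hγ i) (hε i) hCq (hquad y hyf x hzx' q2')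
    rw [Pg_symm, inner_neg_left, norm_sub_rev] at this
    linarith
  · linarith
  · linarith
  · intro h
    exact hγ'sd i x hzx' y hzy' (h.trans_le (min_le_left _ _))
  · intro h
    exact hγ'sd i y hzy' x hzx' (by rw [norm_sub_rev]; exact h.trans_le (min_le_left _ _))
  · rw [hμν]; linarith
  · rw [← hc]; linarith
  · rw [← hc]; have := hω₁ _ q3; linarith
  · rw [← hc]; linarith
  · linarith


/-- **Monotonicity of the maximal difference (Lemma `k`).**  Under the assumptions of
the Strong Maximum Principle, if `u, v` are bounded viscosity sub- and supersolutions of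
`∂_t u - I[u(·,t)] + H(x,Du) = 0` in `Ω × (0,∞)` with generalized Neumann condition,
then `k(t) = max_{closure Ω} (u(·,t) - v(·,t))` is nonincreasing: `k(t) ≤ k(s)` for
`0 ≤ s ≤ t`. -/
theorem maximal_difference_monotone
    (hN : 0 < N) (Ω : Set (Euc N)) (hΩ : IsW2Domain hN Ω)
    (hbdd : Bornology.IsBounded Ω)
    (n : Euc N → Euc N) (hn : IsExteriorNormal Ω n)
    (g : Euc N → Euc N → ℝ) (Cμ Dμ σ : ℝ) (hM : AssumptionM Ω g Cμ Dμ σ)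
    (j : Euc N → Euc N → Euc N) (Aj : ℝ) (hJ0 : AssumptionJ0 Ω j Aj)
    (Cj' Cj Dj : ℝ) (hJ1 : AssumptionJ1 Ω j Cj' Cj Dj)
    (H : Euc N → Euc N → ℝ) (m : ℝ) (hm : 1 < m)
    (hH1 : ∃ c₀ D, AssumptionH1 Ω H σ m c₀ D)
    (hHb : ∃ Ac Cb, AssumptionHb H m Ac Cb)
    (hHc : ∃ C ω₁, AssumptionHc H m C ω₁)
    (hE : AssumptionE Ω H)
    (hcov : CoveringProperty Ω j g)
    (u v : Euc N → ℝ → ℝ)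
    (hub : BddOnT u (closure Ω) (Ici 0))
    (husc : UpperSemicontinuousOn (fun q : Euc N × ℝ => u q.1 q.2) (closure Ω ×ˢ Ici 0))
    (hsub : IsParSubSol Ω j g n Cj (fun x _ pt r p I => pt - I + H x p) u)
    (hvb : BddOnT v (closure Ω) (Ici 0))
    (hlsc : LowerSemicontinuousOn (fun q : Euc N × ℝ => v q.1 q.2) (closure Ω ×ˢ Ici 0))
    (hsup : IsParSuperSol Ω j g n Cj (fun x _ pt r p I => pt - I + H x p) v) :
    ∀ s ∈ Ici (0:ℝ), ∀ t, s ≤ t →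
      sSup ((fun x => u x t - v x t) '' closure Ω) ≤
        sSup ((fun x => u x s - v x s) '' closure Ω) := by
  intro s hs t hst
  obtain ⟨Ac, Cb, hHb⟩ := hHb
  obtain ⟨C, ω₁, hHc⟩ := hHc
  obtain ⟨Bu, hBu⟩ := hub
  obtain ⟨Bv, hBv⟩ := hvb
  rcases (closure Ω).eq_empty_or_nonempty with he | hne
  · simp [he]
  rcases hst.eq_or_lt with rfl | hlt
  · exact le_rfl
  have hbd : BddAbove ((fun x => u x s - v x s) '' closure Ω) := by
    refine ⟨Bu + Bv, ?_⟩
    rintro _ ⟨x, hx, rfl⟩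
    have h1 := abs_le.1 (hBu x hx s hs)
    have h2 := abs_le.1 (hBv x hx s hs)
    show u x s - v x s ≤ Bu + Bv
    linarith
  refine csSup_le (hne.image _) ?_
  rintro _ ⟨x₀, hx₀, rfl⟩
  by_contra hcon
  exact no_excess hN hΩ hbdd hn hM hJ0 hJ1 hHb hHc (B := max Bu Bv)
    (fun x hx t ht => (hBu x hx t ht).trans (le_max_left _ _))
    (fun x hx t ht => (hBv x hx t ht).trans (le_max_right _ _))
    husc hlsc hsub hsup (mem_Ici.1 hs) hlt
    (fun x hx => le_csSup hbd (mem_image_of_mem _ hx)) hx₀ (not_le.1 hcon)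

end Censored

end
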